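/- Let X be a Peano space containing infinitely many non-contractible maximal cyclic subsets. Then X is not locally contractible. -/

import Mathlib

open Metric Set

/-- A Jordan curve: a subset homeomorphic to the circle. -/
def IsJordanCurve {X : Type} [TopologicalSpace X] (J : Set X) : Prop :=
  Nonempty (AddCircle (1 : ℝ) ≃ₜ J)

/-- A set is cyclicly connected if every pair of its points lies on a Jordan curve in it. -/
def CyclicallyConnected {X : Type} [TopologicalSpace X] (C : Set X) : Prop :=
  ∀ x ∈ C, ∀ y ∈ C, ∃ J : Set X, J ⊆ C ∧ IsJordanCurve J ∧ x ∈ J ∧ y ∈ J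

/-- A maximal cyclic subset: non-degenerate, cyclicly connected, and not a proper subset
of any cyclicly connected subset. -/
def MaximalCyclic {X : Type} [TopologicalSpace X] (T : Set X) : Prop :=
  ¬ T.Subsingleton ∧ CyclicallyConnected T ∧
    ∀ C : Set X, CyclicallyConnected C → T ⊆ C → C = T

/-- Locally contractible: every point has arbitrarily small contractible open
neighborhoods. -/
def LocallyContractible (X : Type) [TopologicalSpace X] : Prop :=
  ∀ x : X, ∀ U ∈ nhds x, ∃ V ∈ nhds x, V ⊆ U ∧ IsOpen V ∧ ContractibleSpace ↥V

open Topology Filter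

section Arcs

variable {X : Type} [TopologicalSpace X]

/-- `A` is an arc (possibly reduced to a point) with endpoints `x` and `y`. -/
def IsArc (A : Set X) (x y : X) : Prop :=
  ∃ (γ : ℝ → X) (a b : ℝ), a ≤ b ∧ ContinuousOn γ (Icc a b) ∧ InjOn γ (Icc a b) ∧
    γ a = x ∧ γ b = y ∧ γ '' Icc a b = A

theorem IsArc.left_mem {A : Set X} {x y : X} (h : IsArc A x y) : x ∈ A := by
  obtain ⟨γ, a, b, hab, -, -, rfl, rfl, rfl⟩ := h
  exact mem_image_of_mem _ (left_mem_Icc.2 hab)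

theorem IsArc.right_mem {A : Set X} {x y : X} (h : IsArc A x y) : y ∈ A := by
  obtain ⟨γ, a, b, hab, -, -, rfl, rfl, rfl⟩ := h
  exact mem_image_of_mem _ (right_mem_Icc.2 hab)

theorem IsArc.isCompact {A : Set X} {x y : X} (h : IsArc A x y) : IsCompact A := by
  obtain ⟨γ, a, b, hab, hc, -, rfl, rfl, rfl⟩ := h
  exact isCompact_Icc.image_of_continuousOn hc

theorem IsArc.isPathConnected {A : Set X} {x y : X} (h : IsArc A x y) : IsPathConnected A := by
  obtain ⟨γ, a, b, hab, hc, -, rfl, rfl, rfl⟩ := h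
  exact ((convex_Icc a b).isPathConnected (nonempty_Icc.2 hab)).image' hc

theorem IsArc.isPreconnected {A : Set X} {x y : X} (h : IsArc A x y) : IsPreconnected A :=
  h.isPathConnected.isConnected.isPreconnected

theorem IsArc.singleton (x : X) : IsArc {x} x x :=
  ⟨fun _ => x, 0, 0, le_rfl, continuousOn_const, by simp, rfl, rfl, by simp⟩

theorem IsArc.symm {A : Set X} {x y : X} (h : IsArc A x y) : IsArc A y x := by
  obtain ⟨γ, a, b, hab, hc, hi, rfl, rfl, rfl⟩ := h
  have hm : MapsTo (fun t : ℝ => -t) (Icc (-b) (-a)) (Icc a b) := fun t ht =>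
    ⟨by linarith [ht.2], by linarith [ht.1]⟩
  refine ⟨fun t => γ (-t), -b, -a, by linarith, hc.comp continuousOn_neg hm, ?_, by simp, by simp, ?_⟩
  · intro s hs t ht hst
    have := hi (hm hs) (hm ht) hst
    linarith
  · ext z
    constructor
    · rintro ⟨t, ht, rfl⟩
      exact ⟨-t, hm ht, rfl⟩
    · rintro ⟨t, ht, rfl⟩
      exact ⟨-t, ⟨by linarith [ht.2], by linarith [ht.1]⟩, by simp⟩

/-- An arc may be parametrized by an interval starting at any prescribed real number. -/
theorem IsArc.exists_param {A : Set X} {x y : X} (h : IsArc A x y) (a : ℝ) :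
    ∃ (γ : ℝ → X) (b : ℝ), a ≤ b ∧ ContinuousOn γ (Icc a b) ∧ InjOn γ (Icc a b) ∧
    γ a = x ∧ γ b = y ∧ γ '' Icc a b = A := by
  obtain ⟨γ, c, b, hab, hc, hi, rfl, rfl, rfl⟩ := h
  have hm : MapsTo (fun t : ℝ => t + (c - a)) (Icc a (b - c + a)) (Icc c b) := fun t ht =>
    ⟨by linarith [ht.1], by linarith [ht.2]⟩
  refine ⟨fun t => γ (t + (c - a)), b - c + a, by linarith,
    hc.comp (by fun_prop) hm, ?_, by simp, by simp, ?_⟩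
  · intro s hs t ht hst
    have := hi (hm hs) (hm ht) hst
    linarith
  · ext z
    constructor
    · rintro ⟨t, ht, rfl⟩
      exact ⟨t + (c - a), hm ht, rfl⟩
    · rintro ⟨t, ht, rfl⟩
      exact ⟨t - (c - a), ⟨by linarith [ht.1], by linarith [ht.2]⟩, by simp⟩

/-- Gluing two parametrized curves with a common endpoint. -/
theorem exists_glue {γ₁ γ₂ : ℝ → X} {a b c : ℝ} (hab : a ≤ b) (hbc : b ≤ c)
    (h₁ : ContinuousOn γ₁ (Icc a b)) (h₂ : ContinuousOn γ₂ (Icc b c)) (h : γ₁ b = γ₂ b) :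
    ∃ γ : ℝ → X, ContinuousOn γ (Icc a c) ∧ EqOn γ γ₁ (Icc a b) ∧ EqOn γ γ₂ (Icc b c) ∧
      γ '' Icc a c = γ₁ '' Icc a b ∪ γ₂ '' Icc b c := by
  classical
  let γ : ℝ → X := fun t => if t ≤ b then γ₁ t else γ₂ t
  have e₁ : EqOn γ γ₁ (Icc a b) := fun t ht => if_pos ht.2
  have e₂ : EqOn γ γ₂ (Icc b c) := fun t ht => by
    rcases ht.1.eq_or_lt with rfl | hlt
    · simp [γ, h]
    · simp [γ, not_le.2 hlt]
  refine ⟨γ, ?_, e₁, e₂, ?_⟩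
  · rw [← Icc_union_Icc_eq_Icc hab hbc]
    exact (h₁.congr e₁).union_of_isClosed (h₂.congr e₂) isClosed_Icc isClosed_Icc
  · rw [← Icc_union_Icc_eq_Icc hab hbc, image_union, e₁.image_eq, e₂.image_eq]

theorem IsArc.trans {A B : Set X} {x y z : X} (hA : IsArc A x y) (hB : IsArc B y z)
    (h : A ∩ B ⊆ {y}) : IsArc (A ∪ B) x z := by
  obtain ⟨γ₁, a, b, hab, hc, hi, rfl, rfl, rfl⟩ := hA
  obtain ⟨γ₂, c, hbc, hc', hi', h1, rfl, rfl⟩ := hB.exists_param b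
  obtain ⟨γ, hγ, e₁, e₂, him⟩ := exists_glue hab hbc hc hc' h1.symm
  have key : ∀ s ∈ Icc a b, ∀ t ∈ Icc b c, γ₁ s = γ₂ t → s = t := by
    intro s hs t ht hst
    have h3 : γ₁ s = γ₁ b := h ⟨⟨s, hs, rfl⟩, ⟨t, ht, hst.symm⟩⟩
    rw [hi hs (right_mem_Icc.2 hab) h3]
    exact (hi' ht (left_mem_Icc.2 hbc) (by rw [← hst, h3, h1])).symm
  refine ⟨γ, a, c, hab.trans hbc, hγ, ?_, e₁ (left_mem_Icc.2 hab), e₂ (right_mem_Icc.2 hbc), him⟩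
  intro s hs t ht hst
  rw [← Icc_union_Icc_eq_Icc hab hbc] at hs ht
  rcases hs with hs | hs <;> rcases ht with ht | ht
  · rw [e₁ hs, e₁ ht] at hst
    exact hi hs ht hst
  · rw [e₁ hs, e₂ ht] at hst
    exact key s hs t ht hst
  · rw [e₂ hs, e₁ ht] at hst
    exact (key t ht s hs hst.symm).symm
  · rw [e₂ hs, e₂ ht] at hst
    exact hi' hs ht hst

theorem IsArc.split {A : Set X} {x y z : X} (h : IsArc A x y) (hz : z ∈ A) :
    ∃ A₁ A₂ : Set X, IsArc A₁ x z ∧ IsArc A₂ z y ∧ A₁ ∪ A₂ = A ∧ A₁ ∩ A₂ = {z} := by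
  obtain ⟨γ, a, b, hab, hc, hi, rfl, rfl, rfl⟩ := h
  obtain ⟨t, ht, rfl⟩ := hz
  have s₁ : Icc a t ⊆ Icc a b := Icc_subset_Icc_right ht.2
  have s₂ : Icc t b ⊆ Icc a b := Icc_subset_Icc_left ht.1
  refine ⟨γ '' Icc a t, γ '' Icc t b, ⟨γ, a, t, ht.1, hc.mono s₁, hi.mono s₁, rfl, rfl, rfl⟩,
    ⟨γ, t, b, ht.2, hc.mono s₂, hi.mono s₂, rfl, rfl, rfl⟩, ?_, ?_⟩
  · rw [← image_union, Icc_union_Icc_eq_Icc ht.1 ht.2]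
  · rw [← hi.image_inter s₁ s₂, Icc_inter_Icc_eq_singleton ht.1 ht.2, image_singleton]

/-- The first point of an arc in a closed set. -/
theorem IsArc.exists_first {A K : Set X} {x y : X} (h : IsArc A x y) (hK : IsClosed K)
    (hAK : (A ∩ K).Nonempty) :
    ∃ z ∈ K, ∃ A₁ A₂ : Set X, IsArc A₁ x z ∧ IsArc A₂ z y ∧ A₁ ∪ A₂ = A ∧ A₁ ∩ A₂ = {z} ∧
      A₁ ∩ K = {z} := by
  obtain ⟨γ, a, b, hab, hc, hi, rfl, rfl, rfl⟩ := h
  have hS : IsCompact (Icc a b ∩ γ ⁻¹' K) :=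
    isCompact_Icc.of_isClosed_subset (hc.preimage_isClosed_of_isClosed isClosed_Icc hK)
      inter_subset_left
  have hne : (Icc a b ∩ γ ⁻¹' K).Nonempty := by
    obtain ⟨_, ⟨t, ht, rfl⟩, hK⟩ := hAK
    exact ⟨t, ht, hK⟩
  obtain ⟨t, ⟨ht, htK⟩, hmin⟩ := hS.exists_isLeast hne
  have s₁ : Icc a t ⊆ Icc a b := Icc_subset_Icc_right ht.2
  have s₂ : Icc t b ⊆ Icc a b := Icc_subset_Icc_left ht.1
  refine ⟨γ t, htK, γ '' Icc a t, γ '' Icc t b,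
    ⟨γ, a, t, ht.1, hc.mono s₁, hi.mono s₁, rfl, rfl, rfl⟩,
    ⟨γ, t, b, ht.2, hc.mono s₂, hi.mono s₂, rfl, rfl, rfl⟩, ?_, ?_, ?_⟩
  · rw [← image_union, Icc_union_Icc_eq_Icc ht.1 ht.2]
  · rw [← hi.image_inter s₁ s₂, Icc_inter_Icc_eq_singleton ht.1 ht.2, image_singleton]
  · apply Subset.antisymm
    · rintro _ ⟨⟨s, hs, rfl⟩, hsK⟩
      have := hmin ⟨s₁ hs, hsK⟩
      rw [le_antisymm hs.2 this]
      rfl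
    · rintro _ rfl
      exact ⟨⟨t, right_mem_Icc.2 ht.1, rfl⟩, htK⟩

theorem IsJordanCurve.isCompact {J : Set X} (h : IsJordanCurve J) : IsCompact J := by
  obtain ⟨e⟩ := h
  have := e.compactSpace
  exact isCompact_iff_compactSpace.2 this

/-- Two points of a Jordan curve divide it into two arcs. -/
theorem IsJordanCurve.exists_arcs {J : Set X} (h : IsJordanCurve J) {x y : X} (hx : x ∈ J)
    (hy : y ∈ J) (hxy : x ≠ y) :
    ∃ A B : Set X, IsArc A x y ∧ IsArc B x y ∧ A ∪ B = J ∧ A ∩ B = {x, y} := by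
  obtain ⟨e⟩ := h
  let γ : ℝ → X := fun t => (e (t : AddCircle (1 : ℝ)) : X)
  have hγ : Continuous γ :=
    continuous_subtype_val.comp (e.continuous.comp (AddCircle.continuous_mk' 1))
  have hinj : ∀ s t, γ s = γ t → (s : AddCircle (1 : ℝ)) = t := fun s t hst =>
    e.injective (Subtype.ext hst)
  have hper : ∀ t, γ (t + 1) = γ t := fun t => by
    simp only [γ]
    rw [AddCircle.coe_add_period]
  obtain ⟨s, hs⟩ : ∃ s : ℝ, γ s = x := by
    obtain ⟨s, hs⟩ := QuotientAddGroup.mk_surjective (e.symm ⟨x, hx⟩)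
    refine ⟨s, ?_⟩
    change (e (s : AddCircle (1 : ℝ)) : X) = x
    rw [show (s : AddCircle (1 : ℝ)) = e.symm ⟨x, hx⟩ from hs]
    simp
  have hsurj : ∀ z ∈ J, ∃ t ∈ Ico s (s + 1), γ t = z := by
    intro z hz
    have : e.symm ⟨z, hz⟩ ∈ ((↑) : ℝ → AddCircle (1 : ℝ)) '' Ico s (s + 1) := by
      rw [AddCircle.coe_image_Ico_eq]; trivial
    obtain ⟨t, ht, hte⟩ := this
    exact ⟨t, ht, by simp [γ, hte]⟩
  have hinj₁ : InjOn γ (Ico s (s + 1)) := fun t ht u hu htu =>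
    (AddCircle.coe_eq_coe_iff_of_mem_Ico ht hu).1 (hinj _ _ htu)
  have hinj₂ : InjOn γ (Ioc s (s + 1)) := fun t ht u hu htu =>
    (AddCircle.coe_eq_coe_iff_of_mem_Ioc ht hu).1 (hinj _ _ htu)
  obtain ⟨t, ht, hty⟩ := hsurj y hy
  have hst : s < t := lt_of_le_of_ne ht.1 (by rintro rfl; exact hxy (hs.symm.trans hty))
  refine ⟨γ '' Icc s t, γ '' Icc t (s + 1), ⟨γ, s, t, hst.le, hγ.continuousOn,
    hinj₁.mono (Icc_subset_Ico_right ht.2), hs, hty, rfl⟩,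
    IsArc.symm ⟨γ, t, s + 1, ht.2.le, hγ.continuousOn,
    hinj₂.mono (Icc_subset_Ioc hst le_rfl), hty, by rw [hper, hs], rfl⟩, ?_, ?_⟩
  · rw [← image_union, Icc_union_Icc_eq_Icc hst.le ht.2.le]
    apply Subset.antisymm
    · rintro _ ⟨u, -, rfl⟩
      exact (e _).2
    · intro z hz
      obtain ⟨u, hu, rfl⟩ := hsurj z hz
      exact ⟨u, Ico_subset_Icc_self hu, rfl⟩
  · apply Subset.antisymm
    · rintro _ ⟨⟨u, hu, rfl⟩, ⟨v, hv, hvu⟩⟩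
      rcases hv.2.eq_or_lt with rfl | hlt
      · left; rw [← hvu, hper, hs]
      · have := hinj₁ ⟨hst.le.trans hv.1, hlt⟩ ⟨hu.1, hu.2.trans_lt ht.2⟩ hvu
        subst this
        right
        rw [le_antisymm hu.2 hv.1, hty]; rfl
    · rintro _ (rfl | rfl)
      · exact ⟨⟨s, left_mem_Icc.2 hst.le, hs⟩, ⟨s + 1, right_mem_Icc.2 ht.2.le, by rw [hper, hs]⟩⟩
      · exact ⟨⟨t, right_mem_Icc.2 hst.le, hty⟩, ⟨t, left_mem_Icc.2 ht.2.le, hty⟩⟩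

/-- Two arcs with common endpoints and disjoint otherwise form a Jordan curve. -/
theorem IsArc.isJordanCurve_union [T2Space X] {A B : Set X} {x y : X} (hA : IsArc A x y)
    (hB : IsArc B x y) (hxy : x ≠ y) (h : A ∩ B ⊆ {x, y}) : IsJordanCurve (A ∪ B) := by
  obtain ⟨γ₁, a, b, hab, hc, hi, rfl, rfl, rfl⟩ := hA
  obtain ⟨γ₂, c, hbc, hc', hi', h1, h2, rfl⟩ := hB.symm.exists_param b
  obtain ⟨γ, hγ, e₁, e₂, him⟩ := exists_glue hab hbc hc hc' h1.symm
  have hab' : a < b := lt_of_le_of_ne hab (by rintro rfl; exact hxy rfl)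
  have ha : a ∈ Icc a b := left_mem_Icc.2 hab
  have hb : b ∈ Icc a b := right_mem_Icc.2 hab
  have hb' : b ∈ Icc b c := left_mem_Icc.2 hbc
  have hc₀ : c ∈ Icc b c := right_mem_Icc.2 hbc
  have key : ∀ s ∈ Icc a b, ∀ t ∈ Icc b c, t < c → γ₁ s = γ₂ t → s = t := by
    intro s hs t ht htc hst
    rcases h ⟨⟨s, hs, rfl⟩, ⟨t, ht, hst.symm⟩⟩ with h3 | h3
    · exact absurd (hi' ht hc₀ (by rw [← hst, h3, h2])) htc.ne
    · have h3 : γ₁ s = γ₁ b := h3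
      rw [hi hs hb h3]
      exact (hi' ht hb' (by rw [← hst, h3, h1])).symm
  have hac : a < c := hab'.trans_le hbc
  have hinj : InjOn γ (Ico a c) := by
    intro s hs t ht hst
    rcases le_total s b with hsb | hsb <;> rcases le_total t b with htb | htb
    · rw [e₁ ⟨hs.1, hsb⟩, e₁ ⟨ht.1, htb⟩] at hst
      exact hi ⟨hs.1, hsb⟩ ⟨ht.1, htb⟩ hst
    · rw [e₁ ⟨hs.1, hsb⟩, e₂ ⟨htb, ht.2.le⟩] at hst
      exact key s ⟨hs.1, hsb⟩ t ⟨htb, ht.2.le⟩ ht.2 hst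
    · rw [e₂ ⟨hsb, hs.2.le⟩, e₁ ⟨ht.1, htb⟩] at hst
      exact (key t ⟨ht.1, htb⟩ s ⟨hsb, hs.2.le⟩ hs.2 hst.symm).symm
    · rw [e₂ ⟨hsb, hs.2.le⟩, e₂ ⟨htb, ht.2.le⟩] at hst
      exact hi' ⟨hsb, hs.2.le⟩ ⟨htb, ht.2.le⟩ hst
  have hloop : γ a = γ c := by rw [e₁ ha, e₂ hc₀, h2]
  have hp : a + (c - a) = c := by ring
  have : Fact (0 < c - a) := ⟨by linarith⟩
  let f : AddCircle (c - a) → X := AddCircle.liftIco (c - a) a γ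
  have hf : Continuous f := AddCircle.liftIco_continuous (by rw [hp, hloop]) (by rw [hp]; exact hγ)
  have hfc : ∀ t ∈ Ico a c, f (t : AddCircle (c - a)) = γ t := fun t ht =>
    AddCircle.liftIco_coe_apply (by rw [hp]; exact ht)
  have hex : ∀ u : AddCircle (c - a), ∃ t ∈ Ico a c, (t : AddCircle (c - a)) = u := by
    intro u
    have : u ∈ ((↑) : ℝ → AddCircle (c - a)) '' Ico a (a + (c - a)) := by
      rw [AddCircle.coe_image_Ico_eq]; trivial
    rwa [hp] at this
  have hfi : Function.Injective f := by
    intro u v huv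
    obtain ⟨s, hs, rfl⟩ := hex u
    obtain ⟨t, ht, rfl⟩ := hex v
    rw [hfc s hs, hfc t ht] at huv
    rw [hinj hs ht huv]
  have hrange : range f = γ₁ '' Icc a b ∪ γ₂ '' Icc b c := by
    rw [← him]
    apply Subset.antisymm
    · rintro _ ⟨u, rfl⟩
      obtain ⟨s, hs, rfl⟩ := hex u
      exact ⟨s, Ico_subset_Icc_self hs, (hfc s hs).symm⟩
    · rintro _ ⟨s, hs, rfl⟩
      rcases hs.2.eq_or_lt with rfl | hlt
      · exact ⟨(a : AddCircle (s - a)), by rw [hfc a ⟨le_rfl, hac⟩, hloop]⟩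
      · exact ⟨s, hfc s ⟨hs.1, hlt⟩⟩
  rw [← hrange]
  exact ⟨(AddCircle.homeomorphAddCircle 1 (c - a) one_ne_zero (by linarith)).trans
    (hf.isClosedEmbedding hfi).isEmbedding.toHomeomorph⟩

end Arcs

section PathToArc

variable {X : Type}

/-- The closed subsets of `[0, 1]` containing the endpoints such that `γ` takes the same value at
the two ends of every gap. -/
def GapSets (γ : ℝ → X) : Set (Set ℝ) :=
  {K | IsClosed K ∧ K ⊆ Icc 0 1 ∧ 0 ∈ K ∧ 1 ∈ K ∧
    ∀ s ∈ K, ∀ t ∈ K, s < t → (∀ u ∈ K, ¬ (s < u ∧ u < t)) → γ s = γ t}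

theorem exists_greatest_le {K : Set ℝ} (hK : IsClosed K) {t s : ℝ} (hs : s ∈ K) (hst : s ≤ t) :
    ∃ u ∈ K, u ≤ t ∧ ∀ v ∈ K, v ≤ t → v ≤ u := by
  have hc : IsCompact (K ∩ Icc s t) := isCompact_Icc.inter_left hK
  obtain ⟨u, hu, hmax⟩ := hc.exists_isGreatest ⟨s, hs, le_rfl, hst⟩
  refine ⟨u, hu.1, hu.2.2, fun v hv hvt => ?_⟩
  rcases le_total s v with h | h
  · exact hmax ⟨hv, h, hvt⟩
  · exact h.trans hu.2.1

theorem exists_least_ge {K : Set ℝ} (hK : IsClosed K) {t s : ℝ} (hs : s ∈ K) (hst : t ≤ s) :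
    ∃ u ∈ K, t ≤ u ∧ ∀ v ∈ K, t ≤ v → u ≤ v := by
  have hc : IsCompact (K ∩ Icc t s) := isCompact_Icc.inter_left hK
  obtain ⟨u, hu, hmin⟩ := hc.exists_isLeast ⟨s, hs, hst, le_rfl⟩
  refine ⟨u, hu.1, hu.2.1, fun v hv hvt => ?_⟩
  rcases le_total v s with h | h
  · exact hmin ⟨hv, hvt, h⟩
  · exact hu.2.2.trans h

theorem exists_minimal_gapSet [MetricSpace X] {γ : ℝ → X} (hγ : Continuous γ) :
    ∃ K, Minimal (· ∈ GapSets γ) K := by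
  apply zorn_superset
  intro c hcS hchain
  rcases c.eq_empty_or_nonempty with rfl | hne
  · refine ⟨Icc 0 1, ⟨isClosed_Icc, Subset.rfl, by simp, by simp, ?_⟩, by simp⟩
    intro s hs t ht hst h
    exact absurd ⟨by linarith, by linarith⟩
      (h ((s + t) / 2) ⟨by linarith [hs.1, ht.1], by linarith [hs.2, ht.2]⟩)
  refine ⟨⋂₀ c, ⟨isClosed_sInter fun K hK => (hcS hK).1, ?_, fun K hK => (hcS hK).2.2.1,
    fun K hK => (hcS hK).2.2.2.1, ?_⟩, fun K hK => sInter_subset_of_mem hK⟩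
  · obtain ⟨K, hK⟩ := hne
    exact (sInter_subset_of_mem hK).trans (hcS hK).2.1
  intro s hs t ht hst hgap
  refine eq_of_forall_dist_le fun ε hε => ?_
  obtain ⟨δ₁, hδ₁, h₁⟩ := Metric.continuous_iff.1 hγ s (ε / 2) (by linarith)
  obtain ⟨δ₂, hδ₂, h₂⟩ := Metric.continuous_iff.1 hγ t (ε / 2) (by linarith)
  set δ := min (min δ₁ δ₂) ((t - s) / 2) with hδ
  have hδ0 : 0 < δ := lt_min (lt_min hδ₁ hδ₂) (by linarith)
  have hδa : δ ≤ δ₁ := (min_le_left _ _).trans (min_le_left _ _)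
  have hδb : δ ≤ δ₂ := (min_le_left _ _).trans (min_le_right _ _)
  have hδc : δ ≤ (t - s) / 2 := min_le_right _ _
  have : Nonempty c := hne.to_subtype
  obtain ⟨K, hK⟩ : ∃ K : c, Icc (s + δ / 2) (t - δ / 2) ∩ (K : Set ℝ) = ∅ := by
    refine isCompact_Icc.elim_directed_family_closed (fun K : c => (K : Set ℝ))
      (fun K => (hcS K.2).1) ?_ ?_
    · rw [← sInter_eq_iInter]
      refine eq_empty_of_forall_notMem fun u hu => hgap u hu.2 ⟨by linarith [hu.1.1], by linarith [hu.1.2]⟩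
    · intro K L
      rcases hchain.total K.2 L.2 with h | h
      · exact ⟨K, Subset.rfl, h⟩
      · exact ⟨L, h, Subset.rfl⟩
  have hKS := hcS K.2
  have hsK : s ∈ (K : Set ℝ) := hs K K.2
  have htK : t ∈ (K : Set ℝ) := ht K K.2
  obtain ⟨s', hs', hs'm, hs'max⟩ := exists_greatest_le hKS.1 hsK (t := (s + t) / 2) (by linarith)
  obtain ⟨t', ht', ht'm, ht'min⟩ := exists_least_ge hKS.1 htK (t := (s + t) / 2) (by linarith)
  have hnot : ∀ u ∈ (K : Set ℝ), s + δ / 2 ≤ u → u ≤ t - δ / 2 → False := fun u hu h h' => by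
    have : u ∈ Icc (s + δ / 2) (t - δ / 2) ∩ (K : Set ℝ) := ⟨⟨h, h'⟩, hu⟩
    rw [hK] at this
    exact this
  have hs1 : s ≤ s' := hs'max s hsK (by linarith)
  have ht1 : t' ≤ t := ht'min t htK (by linarith)
  have hs2 : s' < s + δ / 2 := by
    by_contra! h
    exact hnot s' hs' h (by linarith)
  have ht2 : t - δ / 2 < t' := by
    by_contra! h
    exact hnot t' ht' (by linarith) h
  have heq : γ s' = γ t' := by
    refine hKS.2.2.2.2 s' hs' t' ht' (by linarith) fun u hu ⟨h, h'⟩ => ?_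
    rcases le_total u ((s + t) / 2) with h'' | h''
    · linarith [hs'max u hu h'']
    · linarith [ht'min u hu h'']
  have d₁ := h₁ s' (by rw [Real.dist_eq, abs_lt]; constructor <;> linarith)
  have d₂ := h₂ t' (by rw [Real.dist_eq, abs_lt]; constructor <;> linarith)
  calc dist (γ s) (γ t) ≤ dist (γ s) (γ s') + dist (γ s') (γ t) := dist_triangle _ _ _
    _ ≤ ε / 2 + ε / 2 := by
        rw [dist_comm (γ s), heq]
        rw [heq] at d₁
        exact add_le_add d₁.le d₂.le
    _ = ε := by ring

theorem not_between_of_minimal_gapSet {γ : ℝ → X} {K : Set ℝ} (hK : Minimal (· ∈ GapSets γ) K)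
    {s t : ℝ} (hs : s ∈ K) (ht : t ∈ K) (heq : γ s = γ t) {u : ℝ} (hu : u ∈ K)
    (hsu : s < u) (hut : u < t) : False := by
  obtain ⟨hcl, hsub, h0, h1, hgap⟩ := hK.prop
  have hmem : K \ Ioo s t ∈ GapSets γ := by
    refine ⟨hcl.sdiff isOpen_Ioo, sdiff_subset.trans hsub,
      ⟨h0, fun h => ?_⟩, ⟨h1, fun h => ?_⟩, ?_⟩
    · linarith [(hsub hs).1, h.1]
    · linarith [(hsub ht).2, h.2]
    intro s' hs' t' ht' hst' h
    by_cases hex : ∃ k ∈ K, s' < k ∧ k < t'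
    · obtain ⟨k, hk, hk1, hk2⟩ := hex
      have hk' : k ∈ Ioo s t := by
        by_contra hcon
        exact h k ⟨hk, hcon⟩ ⟨hk1, hk2⟩
      have a1 : s ≤ s' := by
        by_contra! hcon
        exact h s ⟨hs, fun h => h.1.false⟩ ⟨hcon, hk'.1.trans hk2⟩
      have a2 : t' ≤ t := by
        by_contra! hcon
        exact h t ⟨ht, fun h => h.2.false⟩ ⟨hk1.trans hk'.2, hcon⟩
      have a3 : s' = s := by
        by_contra hcon
        exact hs'.2 ⟨lt_of_le_of_ne a1 (Ne.symm hcon), hk1.trans hk'.2⟩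
      have a4 : t' = t := by
        by_contra hcon
        exact ht'.2 ⟨hk'.1.trans hk2, lt_of_le_of_ne a2 hcon⟩
      rw [a3, a4, heq]
    · exact hgap s' hs'.1 t' ht'.1 hst' fun k hk hk' => hex ⟨k, hk, hk'⟩
  exact (hK.le_of_le hmem sdiff_subset hu).2 ⟨hsu, hut⟩

/-- Every curve contains a curve with the same endpoints and with interval fibres. -/
theorem exists_monotone_curve [MetricSpace X] {γ : ℝ → X} (hγ : Continuous γ) :
    ∃ f : ℝ → X, Continuous f ∧ f 0 = γ 0 ∧ f 1 = γ 1 ∧ (∀ t, f t ∈ γ '' Icc 0 1) ∧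
      ∀ s ∈ Icc (0 : ℝ) 1, ∀ t ∈ Icc (0 : ℝ) 1, ∀ u ∈ Icc s t, f s = f t → f u = f s := by
  obtain ⟨K, hK⟩ := exists_minimal_gapSet hγ
  obtain ⟨hcl, hsub, h0, h1, hgap⟩ := hK.prop
  have hσ : ∀ t : ℝ, 0 ≤ t → ∃ u ∈ K, u ≤ t ∧ ∀ v ∈ K, v ≤ t → v ≤ u := fun t ht =>
    exists_greatest_le hcl h0 ht
  choose! σ σK σle σmax using hσ
  have σself : ∀ t ∈ K, σ t = t := fun t ht =>
    le_antisymm (σle t (hsub ht).1) (σmax t (hsub ht).1 t ht le_rfl)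
  have hcont : ContinuousOn (γ ∘ σ) (Icc 0 1) := by
    rw [Metric.continuousOn_iff]
    intro t ht ε hε
    by_cases htK : t ∈ K
    · obtain ⟨δ, hδ, h⟩ := Metric.continuous_iff.1 hγ t ε hε
      refine ⟨δ, hδ, fun t' ht' hd => ?_⟩
      rw [Real.dist_eq, abs_lt] at hd
      simp only [Function.comp, σself t htK]
      rcases le_total t t' with hle | hle
      · apply h
        have := σmax t' ht'.1 t htK hle
        have := σle t' ht'.1
        rw [Real.dist_eq, abs_lt]
        constructor <;> linarith
      · obtain ⟨τ, τK, leτ, τmin⟩ := exists_least_ge hcl htK hle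
        have h2 := σle t' ht'.1
        have h3 := τmin t htK hle
        have : γ (σ t') = γ τ := by
          rcases (h2.trans leτ).eq_or_lt with he | hlt
          · rw [he]
          · refine hgap _ (σK t' ht'.1) _ τK hlt fun u hu ⟨ha, hb⟩ => ?_
            rcases le_total u t' with hc | hc
            · linarith [σmax t' ht'.1 u hu hc]
            · linarith [τmin u hu hc]
        rw [this]
        apply h
        rw [Real.dist_eq, abs_lt]
        constructor <;> linarith
    · obtain ⟨δ, hδ, h⟩ := Metric.isOpen_iff.1 hcl.isOpen_compl t htK
      refine ⟨δ, hδ, fun t' ht' hd => ?_⟩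
      have hno : ∀ u ∈ K, u ∉ ball t δ := fun u hu hub => h hub hu
      simp only [Real.ball_eq_Ioo, mem_Ioo, not_and, not_lt] at hno
      rw [Real.dist_eq, abs_lt] at hd
      have key : σ t' = σ t := by
        apply le_antisymm
        · apply σmax t ht.1 _ (σK t' ht'.1)
          by_contra! hcon
          linarith [hno _ (σK t' ht'.1) (by linarith), σle t' ht'.1]
        · apply σmax t' ht'.1 _ (σK t ht.1)
          by_contra! hcon
          linarith [hno _ (σK t ht.1) (by linarith), σle t ht.1]
      simp [Function.comp, key, hε]
  have hfib : ∀ s ∈ Icc (0 : ℝ) 1, ∀ t ∈ Icc (0 : ℝ) 1, ∀ u ∈ Icc s t,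
      γ (σ s) = γ (σ t) → γ (σ u) = γ (σ s) := by
    intro s hs t ht u hu heq
    have hu0 : 0 ≤ u := hs.1.trans hu.1
    have h2 : σ s ≤ σ u := σmax u hu0 _ (σK s hs.1) ((σle s hs.1).trans hu.1)
    have h3 : σ u ≤ σ t := σmax t ht.1 _ (σK u hu0) ((σle u hu0).trans hu.2)
    rcases h2.eq_or_lt with he | hlt
    · rw [he]
    rcases h3.eq_or_lt with he' | hlt'
    · rw [he', heq]
    exact (not_between_of_minimal_gapSet hK (σK s hs.1) (σK t ht.1) heq (σK u hu0) hlt hlt').elim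
  have hproj : ∀ t ∈ Icc (0 : ℝ) 1, (projIcc (0 : ℝ) 1 zero_le_one t : ℝ) = t := fun t ht => by
    rw [projIcc_of_mem _ ht]
  refine ⟨fun t => γ (σ (projIcc 0 1 zero_le_one t)), ?_, ?_, ?_, ?_, ?_⟩
  · exact hcont.comp_continuous (continuous_subtype_val.comp continuous_projIcc) fun t => (projIcc _ _ _ t).2
  · simp [σself 0 h0]
  · simp [σself 1 h1]
  · intro t
    exact ⟨_, hsub (σK _ (projIcc (0 : ℝ) 1 zero_le_one t).2.1), rfl⟩
  · intro s hs t ht u hu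
    simp only [hproj s hs, hproj t ht, hproj u ⟨hs.1.trans hu.1, hu.2.trans ht.2⟩]
    exact hfib s hs t ht u hu

/-- The maximum of `g` over the segment from `0` to `t`. -/
noncomputable def runningMax (g : ℝ → ℝ) (t : ℝ) : ℝ :=
  sSup ((fun s => g (s * t)) '' Icc 0 1)

theorem continuous_runningMax {g : ℝ → ℝ} (hg : Continuous g) : Continuous (runningMax g) :=
  isCompact_Icc.continuous_sSup (f := fun t s => g (s * t)) (by fun_prop)

theorem le_runningMax {g : ℝ → ℝ} (hg : Continuous g) {t v : ℝ} (hv : v ∈ Icc 0 t) :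
    g v ≤ runningMax g t := by
  refine le_csSup (isCompact_Icc.image (by fun_prop)).bddAbove ?_
  rcases (hv.1.trans hv.2).eq_or_lt with rfl | ht
  · exact ⟨0, by simp, by simp [le_antisymm hv.2 hv.1]⟩
  · exact ⟨v / t, ⟨div_nonneg hv.1 ht.le, (div_le_one ht).2 hv.2⟩, by
      simp only; rw [div_mul_cancel₀ _ ht.ne']⟩

theorem runningMax_le {g : ℝ → ℝ} {t c : ℝ} (ht : 0 ≤ t) (h : ∀ v ∈ Icc 0 t, g v ≤ c) :
    runningMax g t ≤ c := by
  refine csSup_le (Nonempty.image _ ⟨0, by simp⟩) ?_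
  rintro _ ⟨s, hs, rfl⟩
  exact h _ ⟨mul_nonneg hs.1 ht, mul_le_of_le_one_left ht hs.2⟩

theorem runningMax_mono {g : ℝ → ℝ} (hg : Continuous g) {s t : ℝ} (hs : 0 ≤ s) (hst : s ≤ t) :
    runningMax g s ≤ runningMax g t :=
  runningMax_le hs fun _ hv => le_runningMax hg ⟨hv.1, hv.2.trans hst⟩

/-- The monotone functions separating the fibres of a curve with interval fibres. -/
theorem exists_fibre_coordinate [MetricSpace X] {f : ℝ → X} (hf : Continuous f)
    (hfib : ∀ s ∈ Icc (0 : ℝ) 1, ∀ t ∈ Icc (0 : ℝ) 1, ∀ u ∈ Icc s t, f s = f t → f u = f s) :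
    ∃ φ : ℝ → ℝ, Continuous φ ∧ ∀ s ∈ Icc (0 : ℝ) 1, ∀ t ∈ Icc (0 : ℝ) 1, s ≤ t →
      φ s ≤ φ t ∧ (f s = f t ↔ φ s = φ t) := by
  let g : ℝ → ℝ → ℝ := fun r v => min 1 (infDist (f v) (f '' Icc 0 r))
  have hg : ∀ r, Continuous (g r) := fun r =>
    continuous_const.min ((continuous_infDist_pt _).comp hf)
  have hg0 : ∀ r v, 0 ≤ g r v := fun r v => le_min zero_le_one infDist_nonneg
  have hg1 : ∀ r v, g r v ≤ 1 := fun r v => min_le_left _ _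
  have hM0 : ∀ r t, 0 ≤ runningMax (g r) t := fun r t =>
    Real.sSup_nonneg (by rintro _ ⟨s, -, rfl⟩; exact hg0 _ _)
  have hM1 : ∀ r t, runningMax (g r) t ≤ 1 := fun r t =>
    csSup_le (Nonempty.image _ ⟨0, by simp⟩) (by rintro _ ⟨s, -, rfl⟩; exact hg1 _ _)
  let q : ℕ → ℝ := TopologicalSpace.denseSeq ℝ
  let ψ : ℕ → ℝ → ℝ := fun n t => (1 / 2 : ℝ) ^ n * runningMax (g (q n)) t
  have hψ : ∀ n t, ‖ψ n t‖ ≤ (1 / 2 : ℝ) ^ n := fun n t => by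
    rw [Real.norm_of_nonneg (mul_nonneg (by positivity) (hM0 _ _))]
    exact mul_le_of_le_one_right (by positivity) (hM1 _ _)
  have hsum : ∀ t, Summable fun n => ψ n t := fun t =>
    Summable.of_norm_bounded summable_geometric_two fun n => hψ n t
  have hmono : ∀ s t, 0 ≤ s → s ≤ t → ∀ n, ψ n s ≤ ψ n t := fun s t hs hst n =>
    mul_le_mul_of_nonneg_left (runningMax_mono (hg _) hs hst) (by positivity)
  refine ⟨fun t => ∑' n, ψ n t, continuous_tsum
    (fun n => continuous_const.mul (continuous_runningMax (hg _))) summable_geometric_two hψ, ?_⟩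
  intro s hs t ht hst
  refine ⟨(hsum s).tsum_le_tsum (hmono s t hs.1 hst) (hsum t), fun heq => ?_, fun heq => ?_⟩
  · refine tsum_congr fun n => ?_
    refine congrArg (fun z => (1 / 2 : ℝ) ^ n * z)
      (le_antisymm (runningMax_mono (hg _) hs.1 hst) (runningMax_le ht.1 ?_))
    intro v hv
    rcases le_total v s with h | h
    · exact le_runningMax (hg _) ⟨hv.1, h⟩
    · have : f v = f s := hfib s hs t ht v ⟨h, hv.2⟩ heq
      calc g (q n) v = g (q n) s := by simp only [g, this]
        _ ≤ _ := le_runningMax (hg _) ⟨hs.1, le_rfl⟩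
  · by_contra hne
    have hlt : s < t := lt_of_le_of_ne hst (by rintro rfl; exact hne rfl)
    have hopen : IsOpen {r | f r ≠ f t} := isOpen_ne_fun hf continuous_const
    have hcl : s ∈ closure (Ioo s t) := by
      rw [closure_Ioo hlt.ne]
      exact left_mem_Icc.2 hst
    obtain ⟨n, hn⟩ := (TopologicalSpace.denseRange_denseSeq ℝ).exists_mem_open
      (hopen.inter isOpen_Ioo) (mem_closure_iff.1 hcl _ hopen hne)
    have hr : q n ∈ {r | f r ≠ f t} ∩ Ioo s t := hn
    have h0 : runningMax (g (q n)) s ≤ 0 := by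
      refine runningMax_le hs.1 fun v hv => (min_le_right _ _).trans ?_
      rw [infDist_zero_of_mem]
      exact ⟨v, ⟨hv.1, hv.2.trans hr.2.1.le⟩, rfl⟩
    have h1 : 0 < runningMax (g (q n)) t := by
      refine lt_of_lt_of_le ?_ (le_runningMax (hg _) ⟨ht.1, le_rfl⟩)
      refine lt_min zero_lt_one ?_
      rw [← (isCompact_Icc.image hf).isClosed.notMem_iff_infDist_pos
        ⟨f s, s, ⟨hs.1, hr.2.1.le⟩, rfl⟩]
      rintro ⟨v, hv, hvt⟩
      have hv1 : v ∈ Icc (0 : ℝ) 1 := ⟨hv.1, (hv.2.trans hr.2.2.le).trans ht.2⟩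
      exact hr.1 ((hfib v hv1 t ht (q n) ⟨hv.2, hr.2.2.le⟩ hvt).trans hvt)
    refine absurd heq (ne_of_lt ((hsum s).tsum_lt_tsum (i := n) (hmono s t hs.1 hst) ?_ (hsum t)))
    exact mul_lt_mul_of_pos_left (h0.trans_lt h1) (by positivity)

/-- A curve with interval fibres traces an arc. -/
theorem isArc_of_interval_fibres [MetricSpace X] {f : ℝ → X} (hf : Continuous f)
    (hfib : ∀ s ∈ Icc (0 : ℝ) 1, ∀ t ∈ Icc (0 : ℝ) 1, ∀ u ∈ Icc s t, f s = f t → f u = f s) :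
    IsArc (f '' Icc 0 1) (f 0) (f 1) := by
  obtain ⟨φ, hφ, h⟩ := exists_fibre_coordinate hf hfib
  have h0 : (0 : ℝ) ∈ Icc (0 : ℝ) 1 := by simp
  have h1 : (1 : ℝ) ∈ Icc (0 : ℝ) 1 := by simp
  have hle : φ 0 ≤ φ 1 := (h 0 h0 1 h1 zero_le_one).1
  have hiff : ∀ s ∈ Icc (0 : ℝ) 1, ∀ t ∈ Icc (0 : ℝ) 1, (f s = f t ↔ φ s = φ t) := by
    intro s hs t ht
    rcases le_total s t with hst | hst
    · exact (h s hs t ht hst).2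
    · rw [eq_comm, (h t ht s hs hst).2, eq_comm]
  let Φ : C(Icc (0 : ℝ) 1, Icc (φ 0) (φ 1)) :=
    ⟨fun t => ⟨φ t, (h 0 h0 t t.2 t.2.1).1, (h t t.2 1 h1 t.2.2).1⟩, by fun_prop⟩
  have hsurj : Function.Surjective Φ := by
    rintro ⟨v, hv⟩
    obtain ⟨t, ht, rfl⟩ := intermediate_value_Icc zero_le_one hφ.continuousOn hv
    exact ⟨⟨t, ht⟩, rfl⟩
  have hq : IsQuotientMap Φ := (Φ.continuous.isClosedMap).isQuotientMap Φ.continuous hsurj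
  let F : C(Icc (0 : ℝ) 1, X) := ⟨fun t => f t, by fun_prop⟩
  have hF : Function.FactorsThrough F Φ := fun s t hst =>
    (hiff s s.2 t t.2).2 (congrArg Subtype.val hst)
  let G : C(Icc (φ 0) (φ 1), X) := hq.lift F hF
  have hG : ∀ t, G (Φ t) = f t := fun t => by
    have := hq.lift_comp F hF
    exact congrArg (fun u : C(Icc (0 : ℝ) 1, X) => u t) this
  have hE : ∀ t (ht : t ∈ Icc (0 : ℝ) 1), IccExtend hle G (φ t) = f t := fun t ht => by
    have hmem : φ t ∈ Icc (φ 0) (φ 1) := (Φ ⟨t, ht⟩).2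
    rw [IccExtend_of_mem hle G hmem]
    exact hG ⟨t, ht⟩
  have hex : ∀ v ∈ Icc (φ 0) (φ 1), ∃ t ∈ Icc (0 : ℝ) 1, φ t = v := fun v hv =>
    intermediate_value_Icc zero_le_one hφ.continuousOn hv
  refine ⟨IccExtend hle G, φ 0, φ 1, hle, (G.continuous.Icc_extend').continuousOn, ?_,
    hE 0 h0, hE 1 h1, ?_⟩
  · intro u hu v hv huv
    obtain ⟨s, hs, rfl⟩ := hex u hu
    obtain ⟨t, ht, rfl⟩ := hex v hv
    rw [hE s hs, hE t ht] at huv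
    exact (hiff s hs t ht).1 huv
  · apply Subset.antisymm
    · rintro _ ⟨u, hu, rfl⟩
      obtain ⟨s, hs, rfl⟩ := hex u hu
      exact ⟨s, hs, (hE s hs).symm⟩
    · rintro _ ⟨s, hs, rfl⟩
      exact ⟨φ s, (Φ ⟨s, hs⟩).2, hE s hs⟩

/-- Points joined by a path in a set are joined by an arc in this set. -/
theorem JoinedIn.exists_isArc [MetricSpace X] {S : Set X} {x y : X} (h : JoinedIn S x y) :
    ∃ A ⊆ S, IsArc A x y := by
  obtain ⟨γ, hγ⟩ := h
  obtain ⟨f, hf, hf0, hf1, hsub, hfib⟩ := exists_monotone_curve γ.continuous_extend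
  refine ⟨f '' Icc 0 1, ?_, ?_⟩
  · rintro _ ⟨t, -, rfl⟩
    obtain ⟨s, hs, hst⟩ := hsub t
    rw [← hst, γ.extend_apply hs]
    exact hγ _
  · have := isArc_of_interval_fibres hf hfib
    rwa [hf0, hf1, γ.extend_zero, γ.extend_one] at this

end PathToArc

section Cyclic

variable {X : Type} [TopologicalSpace X]

theorem IsJordanCurve.cyclicallyConnected {J : Set X} (hJ : IsJordanCurve J) :
    CyclicallyConnected J := fun _ hx _ hy => ⟨J, Subset.rfl, hJ, hx, hy⟩

theorem exists_chord_of_tangent [T2Space X] {J B A A' : Set X} {p q y f : X}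
    (hJ : IsClosed J) (hA : IsArc A y p) (hA' : IsArc A' y p) (hAA' : A ∩ A' = {y, p})
    (hAJ : A ∩ J = {p}) (hAJ' : A' ∩ J = {p}) (hB : IsArc B q f) (hq : q ∈ J)
    (hpB : p ∉ B) (hBA : B ∩ (A ∪ A') = {f}) (hfA : f ∈ A) :
    ∃ E c d, E ⊆ A ∪ A' ∪ B ∧ c ≠ d ∧ IsArc E c d ∧ E ∩ J = {c, d} ∧ y ∈ E := by
  obtain ⟨e, he, B₁, B₂, hB₁, -, hB₁₂, -, hB₁J⟩ := hB.symm.exists_first hJ ⟨q, hB.left_mem, hq⟩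
  obtain ⟨A₁, A₂, hA₁, hA₂, hA₁₂, hA₁A₂⟩ := hA.split hfA
  have hpf : p ≠ f := fun h => hpB (h ▸ hB.right_mem)
  have hfB : f ∈ B := hB.right_mem
  have heB₁ := hB₁.right_mem
  have hyA₁ := hA₁.left_mem
  have hpA₂ := hA₂.right_mem
  have hpA' := hA'.right_mem
  have hyA' := hA'.left_mem
  have hpJ : p ∈ J := by
    have : p ∈ A ∩ J := by rw [hAJ]; rfl
    exact this.2
  simp only [Set.ext_iff, mem_inter_iff, mem_union, mem_singleton_iff, mem_insert_iff] at *
  have hE : IsArc (B₁ ∪ A₁) e y := hB₁.symm.trans hA₁.symm (by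
    intro x hx
    have := hBA x
    simp only [mem_inter_iff, mem_singleton_iff] at *
    grind)
  refine ⟨B₁ ∪ A₁ ∪ A', e, p, ?_, ?_, hE.trans hA' ?_, ?_, ?_⟩
  · intro x hx
    simp only [mem_union] at *
    grind
  · rintro rfl
    grind
  · intro x hx
    simp only [mem_union, mem_inter_iff, mem_singleton_iff] at *
    grind
  · intro x
    simp only [mem_union]
    grind
  · simp only [mem_union]
    grind

/-- A point of a cyclicly connected set that shares two points with a Jordan curve lies on a chord
of this curve. -/
theorem CyclicallyConnected.exists_chord [T2Space X] {J T : Set X} (hT : CyclicallyConnected T)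
    (hJ : IsJordanCurve J) {p q y : X} (hpq : p ≠ q) (hpJ : p ∈ J) (hpT : p ∈ T) (hqJ : q ∈ J)
    (hqT : q ∈ T) (hyT : y ∈ T) (hyJ : y ∉ J) :
    ∃ E c d, E ⊆ T ∧ c ≠ d ∧ IsArc E c d ∧ E ∩ J = {c, d} ∧ y ∈ E := by
  have hJc : IsClosed J := hJ.isCompact.isClosed
  have hyp : y ≠ p := fun h => hyJ (h ▸ hpJ)
  have hyq : q ≠ y := fun h => hyJ (h ▸ hqJ)
  obtain ⟨J₁, hJ₁T, hJ₁, hyJ₁, hpJ₁⟩ := hT y hyT p hpT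
  obtain ⟨A, A', hA, hA', hAJ₁, hAA'⟩ := hJ₁.exists_arcs hyJ₁ hpJ₁ hyp
  obtain ⟨c, hc, C, _, hC, -, hCA, -, hCJ⟩ := hA.exists_first hJc ⟨p, hA.right_mem, hpJ⟩
  obtain ⟨d, hd, D, _, hD, -, hDA, -, hDJ⟩ := hA'.exists_first hJc ⟨p, hA'.right_mem, hpJ⟩
  have hyC := hC.left_mem
  have hyD := hD.left_mem
  have hcC := hC.right_mem
  have hdD := hD.right_mem
  have hCT : C ⊆ T := fun x hx => hJ₁T (hAJ₁ ▸ Or.inl (hCA ▸ Or.inl hx))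
  have hDT : D ⊆ T := fun x hx => hJ₁T (hAJ₁ ▸ Or.inr (hDA ▸ Or.inl hx))
  by_cases hcd : c = d
  · subst hcd
    have hcp : c = p := by
      have : c ∈ A ∩ A' := ⟨hCA ▸ Or.inl hcC, hDA ▸ Or.inl hdD⟩
      rw [hAA'] at this
      rcases this with h | h
      · exact absurd (h ▸ hc) hyJ
      · exact h
    subst hcp
    have hCD : C ∩ D = {y, c} := by
      apply Subset.antisymm
      · rw [← hAA']
        exact inter_subset_inter (hCA ▸ subset_union_left) (hDA ▸ subset_union_left)
      · rintro x (rfl | rfl)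
        exacts [⟨hyC, hyD⟩, ⟨hcC, hdD⟩]
    obtain ⟨J₂, hJ₂T, hJ₂, hqJ₂, hyJ₂⟩ := hT q hqT y hyT
    obtain ⟨B, B', hB, hB', hBJ₂, hBB'⟩ := hJ₂.exists_arcs hqJ₂ hyJ₂ hyq
    obtain ⟨B, hB, hBT, hcB⟩ : ∃ B, IsArc B q y ∧ B ⊆ T ∧ c ∉ B := by
      by_cases h : c ∈ B
      · refine ⟨B', hB', fun x hx => hJ₂T (hBJ₂ ▸ Or.inr hx), fun h' => ?_⟩
        have : c ∈ B ∩ B' := ⟨h, h'⟩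
        rw [hBB'] at this
        rcases this with h | h
        exacts [hpq h, hyp h.symm]
      · exact ⟨B, hB, fun x hx => hJ₂T (hBJ₂ ▸ Or.inl hx), h⟩
    obtain ⟨f, hf, B₁, _, hB₁, -, hB₁B, -, hB₁C⟩ := hB.exists_first
      (hC.isCompact.isClosed.union hD.isCompact.isClosed) ⟨y, hB.right_mem, Or.inl hyC⟩
    have hB₁T : B₁ ⊆ B := hB₁B ▸ subset_union_left
    have key : ∃ E c' d, E ⊆ C ∪ D ∪ B₁ ∧ c' ≠ d ∧ IsArc E c' d ∧ E ∩ J = {c', d} ∧ y ∈ E := by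
      rcases hf with hf | hf
      · exact exists_chord_of_tangent hJc hC hD hCD hCJ hDJ hB₁ hqJ (fun h => hcB (hB₁T h)) hB₁C hf
      · rw [union_comm C D]
        exact exists_chord_of_tangent hJc hD hC (inter_comm C D ▸ hCD) hDJ hCJ hB₁ hqJ
          (fun h => hcB (hB₁T h)) (union_comm C D ▸ hB₁C) hf
    obtain ⟨E, c', d, hE, h⟩ := key
    exact ⟨E, c', d, hE.trans (union_subset (union_subset hCT hDT) (hB₁T.trans hBT)), h⟩
  · refine ⟨C ∪ D, c, d, union_subset hCT hDT, hcd, hC.symm.trans hD ?_, ?_, Or.inl hyC⟩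
    · rintro x ⟨hx, hx'⟩
      have : x ∈ A ∩ A' := ⟨hCA ▸ Or.inl hx, hDA ▸ Or.inl hx'⟩
      rw [hAA'] at this
      rcases this with h | rfl
      · exact h
      · have h1 : x ∈ C ∩ J := ⟨hx, hpJ⟩
        have h2 : x ∈ D ∩ J := ⟨hx', hpJ⟩
        rw [hCJ] at h1
        rw [hDJ] at h2
        exact absurd (h1.symm.trans h2) hcd
    · rw [union_inter_distrib_right, hCJ, hDJ]
      rfl

/-- Adding a chord to a Jordan curve produces a Jordan curve through the chord and any given point
of the original curve. -/
theorem IsJordanCurve.exists_of_chord [T2Space X] {J E : Set X} (hJ : IsJordanCurve J) {c d x : X}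
    (hE : IsArc E c d) (hcd : c ≠ d) (hEJ : E ∩ J = {c, d}) (hx : x ∈ J) :
    ∃ J', IsJordanCurve J' ∧ J' ⊆ E ∪ J ∧ E ⊆ J' ∧ x ∈ J' := by
  have hc : c ∈ E ∩ J := by rw [hEJ]; exact Or.inl rfl
  have hd : d ∈ E ∩ J := by rw [hEJ]; exact Or.inr rfl
  obtain ⟨F, F', hF, hF', hFJ, -⟩ := hJ.exists_arcs hc.2 hd.2 hcd
  obtain ⟨F, hF, hFJ, hxF⟩ : ∃ F, IsArc F c d ∧ F ⊆ J ∧ x ∈ F := by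
    rw [← hFJ] at hx
    rcases hx with hx | hx
    · exact ⟨F, hF, hFJ ▸ subset_union_left, hx⟩
    · exact ⟨F', hF', hFJ ▸ subset_union_right, hx⟩
  exact ⟨E ∪ F, hE.isJordanCurve_union hF hcd (hEJ ▸ inter_subset_inter_right E hFJ),
    union_subset_union_right E hFJ, subset_union_left, Or.inr hxF⟩

theorem CyclicallyConnected.union_jordan [T2Space X] {J T : Set X} (hT : CyclicallyConnected T)
    (hJ : IsJordanCurve J) {p q : X} (hpq : p ≠ q) (hpJ : p ∈ J) (hpT : p ∈ T) (hqJ : q ∈ J)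
    (hqT : q ∈ T) : CyclicallyConnected (J ∪ T) := by
  have key : ∀ a ∈ J, ∀ b ∈ T, ∃ J' ⊆ J ∪ T, IsJordanCurve J' ∧ a ∈ J' ∧ b ∈ J' := by
    intro a ha b hb
    by_cases hbJ : b ∈ J
    · exact ⟨J, subset_union_left, hJ, ha, hbJ⟩
    · obtain ⟨E, c, d, hET, hcd, hE, hEJ, hbE⟩ :=
        hT.exists_chord hJ hpq hpJ hpT hqJ hqT hb hbJ
      obtain ⟨J', hJ', hsub, hEJ', haJ'⟩ := hJ.exists_of_chord hE hcd hEJ ha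
      refine ⟨J', hsub.trans ?_, hJ', haJ', hEJ' hbE⟩
      rw [union_comm J T]
      exact union_subset_union_left J hET
  rintro a (ha | ha) b (hb | hb)
  · exact ⟨J, subset_union_left, hJ, ha, hb⟩
  · exact key a ha b hb
  · obtain ⟨J', h1, h2, h3, h4⟩ := key b hb a ha
    exact ⟨J', h1, h2, h4, h3⟩
  · obtain ⟨J', h1, h2⟩ := hT a ha b hb
    exact ⟨J', h1.trans subset_union_right, h2⟩

/-- The union of two cyclicly connected sets with two common points is cyclicly connected. -/
theorem CyclicallyConnected.union [T2Space X] {S T : Set X} (hS : CyclicallyConnected S)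
    (hT : CyclicallyConnected T) {p q : X} (hpq : p ≠ q) (hpS : p ∈ S) (hpT : p ∈ T)
    (hqS : q ∈ S) (hqT : q ∈ T) : CyclicallyConnected (S ∪ T) := by
  obtain ⟨J, hJS, hJ, hpJ, hqJ⟩ := hS p hpS q hqS
  have hD := hT.union_jordan hJ hpq hpJ hpT hqJ hqT
  have key : ∀ a ∈ S, ∀ b ∈ T, ∃ J' ⊆ S ∪ T, IsJordanCurve J' ∧ a ∈ J' ∧ b ∈ J' := by
    intro a ha b hb
    by_cases haJ : a ∈ J
    · obtain ⟨J', h1, h2⟩ := hD a (Or.inl haJ) b (Or.inr hb)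
      exact ⟨J', h1.trans (union_subset_union_left T hJS), h2⟩
    · obtain ⟨E, c, d, hES, hcd, hE, hEJ, haE⟩ :=
        hS.exists_chord hJ hpq hpJ hpS hqJ hqS ha haJ
      obtain ⟨J', hJ', hsub, hEJ', -⟩ := hJ.exists_of_chord hE hcd hEJ hpJ
      have hc : c ∈ E ∩ J := by rw [hEJ]; exact Or.inl rfl
      have hd : d ∈ E ∩ J := by rw [hEJ]; exact Or.inr rfl
      obtain ⟨J'', h1, h2⟩ := hD.union_jordan hJ' hcd (hEJ' hc.1) (Or.inl hc.2) (hEJ' hd.1)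
        (Or.inl hd.2) a (Or.inl (hEJ' haE)) b (Or.inr (Or.inr hb))
      refine ⟨J'', h1.trans (union_subset ?_ (union_subset_union_left T hJS)), h2⟩
      exact (hsub.trans (union_subset hES hJS)).trans subset_union_left
  rintro a (ha | ha) b (hb | hb)
  · obtain ⟨J', h1, h2⟩ := hS a ha b hb
    exact ⟨J', h1.trans subset_union_left, h2⟩
  · exact key a ha b hb
  · obtain ⟨J', h1, h2, h3, h4⟩ := key b hb a ha
    exact ⟨J', h1, h2, h4, h3⟩
  · obtain ⟨J', h1, h2⟩ := hT a ha b hb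
    exact ⟨J', h1.trans subset_union_right, h2⟩

theorem MaximalCyclic.subset_of_two_points [T2Space X] {T C : Set X} (hT : MaximalCyclic T)
    (hC : CyclicallyConnected C) {p q : X} (hpq : p ≠ q) (hpC : p ∈ C) (hpT : p ∈ T) (hqC : q ∈ C)
    (hqT : q ∈ T) : C ⊆ T := by
  rw [← hT.2.2 _ (hC.union hT.2.1 hpq hpC hpT hqC hqT) subset_union_right]
  exact subset_union_left

/-- A maximal cyclic set contains every arc joining two of its points. -/
theorem MaximalCyclic.arc_subset [T2Space X] {T A : Set X} (hT : MaximalCyclic T) {x y : X}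
    (hA : IsArc A x y) (hx : x ∈ T) (hy : y ∈ T) : A ⊆ T := by
  intro z hz
  by_contra hzT
  obtain ⟨J, hJT, hJ, hxJ, hyJ⟩ := hT.2.1 x hx y hy
  have hJc := hJ.isCompact.isClosed
  obtain ⟨A₁, A₂, hA₁, hA₂, -, hA₁₂⟩ := hA.split hz
  obtain ⟨c, hc, C, _, hC, -, hCA, -, hCJ⟩ := hA₁.symm.exists_first hJc ⟨x, hA₁.left_mem, hxJ⟩
  obtain ⟨d, hd, D, _, hD, -, hDA, -, hDJ⟩ := hA₂.exists_first hJc ⟨y, hA₂.right_mem, hyJ⟩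
  have hCD : C ∩ D ⊆ {z} := by
    rw [← hA₁₂]
    exact inter_subset_inter (hCA ▸ subset_union_left) (hDA ▸ subset_union_left)
  have hcd : c ≠ d := by
    rintro rfl
    have : c = z := hCD ⟨hC.right_mem, hD.right_mem⟩
    exact hzT (hJT (this ▸ hc))
  have hE := hC.symm.trans hD hCD
  obtain ⟨J', hJ', -, hEJ', -⟩ := hJ.exists_of_chord hE hcd
    (by rw [union_inter_distrib_right, hCJ, hDJ]; rfl) hxJ
  exact hzT (hT.subset_of_two_points hJ'.cyclicallyConnected hcd (hEJ' (Or.inl hC.right_mem))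
    (hJT hc) (hEJ' (Or.inr hD.right_mem)) (hJT hd) (hEJ' (Or.inl hC.left_mem)))

theorem CyclicallyConnected.exists_isArc_avoiding {T : Set X} (hT : CyclicallyConnected T)
    {x y z : X} (hx : x ∈ T) (hy : y ∈ T) (hxz : x ≠ z) (hyz : y ≠ z) :
    ∃ A ⊆ T, IsArc A x y ∧ z ∉ A := by
  by_cases hxy : x = y
  · subst hxy
    exact ⟨{x}, singleton_subset_iff.2 hx, IsArc.singleton x, fun h => hxz (Eq.symm h)⟩
  obtain ⟨J, hJT, hJ, hxJ, hyJ⟩ := hT x hx y hy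
  obtain ⟨A, A', hA, hA', hAJ, hAA'⟩ := hJ.exists_arcs hxJ hyJ hxy
  by_cases hz : z ∈ A
  · refine ⟨A', fun w hw => hJT (hAJ ▸ Or.inr hw), hA', fun hz' => ?_⟩
    have : z ∈ A ∩ A' := ⟨hz, hz'⟩
    rw [hAA'] at this
    rcases this with h | h
    exacts [hxz h.symm, hyz h.symm]
  · exact ⟨A, fun w hw => hJT (hAJ ▸ Or.inl hw), hA, hz⟩

theorem CyclicallyConnected.exists_isArc {T : Set X} (hT : CyclicallyConnected T)
    {x y : X} (hx : x ∈ T) (hy : y ∈ T) : ∃ A ⊆ T, IsArc A x y := by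
  by_cases hxy : x = y
  · subst hxy
    exact ⟨{x}, singleton_subset_iff.2 hx, IsArc.singleton x⟩
  obtain ⟨J, hJT, hJ, hxJ, hyJ⟩ := hT x hx y hy
  obtain ⟨A, A', hA, -, hAJ, -⟩ := hJ.exists_arcs hxJ hyJ hxy
  exact ⟨A, fun w hw => hJT (hAJ ▸ Or.inl hw), hA⟩

theorem IsArc.joinedIn {A : Set X} {x y : X} (hA : IsArc A x y) : JoinedIn A x y :=
  hA.isPathConnected.joinedIn _ hA.left_mem _ hA.right_mem

theorem CyclicallyConnected.isPreconnected_diff_singleton {T : Set X}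
    (hT : CyclicallyConnected T) (z : X) : IsPreconnected (T \ {z}) := by
  refine isPreconnected_of_forall_pair fun x hx y hy => ?_
  obtain ⟨A, hAT, hA, hz⟩ := hT.exists_isArc_avoiding hx.1 hy.1 hx.2 hy.2
  exact ⟨A, fun w hw => ⟨hAT hw, fun h => hz (h ▸ hw)⟩, hA.left_mem, hA.right_mem,
    hA.isPreconnected⟩

end Cyclic

section Linking

variable {X : Type}

theorem IsArc.prodMk [TopologicalSpace X] {A : Set X} {x y : X} (hA : IsArc A x y) (s : ℝ) :
    IsArc ((fun a => (a, s)) '' A) (x, s) (y, s) := by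
  obtain ⟨γ, a, b, hab, hc, hi, rfl, rfl, rfl⟩ := hA
  refine ⟨fun t => (γ t, s), a, b, hab, hc.prodMk continuousOn_const, ?_, rfl, rfl, ?_⟩
  · intro t ht t' ht' h
    exact hi ht ht' (congrArg Prod.fst h)
  · rw [image_image]

theorem isArc_vertical [TopologicalSpace X] (x : X) {s : ℝ} (hs : s ≠ 0) :
    IsArc ((fun t : ℝ => (x, s * t)) '' Icc 0 1) (x, 0) (x, s) := by
  refine ⟨fun t => (x, s * t), 0, 1, zero_le_one, by fun_prop, ?_, by simp, by simp, rfl⟩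
  intro t _ t' _ h
  exact mul_left_cancel₀ hs (congrArg Prod.snd h)

/-- A handle attached to `N × {0}` at two points, completed to a Jordan curve. -/
theorem CyclicallyConnected.exists_handle [TopologicalSpace X] [T2Space X] {N : Set X}
    (hN : CyclicallyConnected N) {u v : X}
    (hu : u ∈ N) (hv : v ∈ N) (huv : u ≠ v) {s : ℝ} (hs : s ≠ 0) :
    ∃ J : Set (X × ℝ), IsJordanCurve J ∧ (u, 0) ∈ J ∧ (v, 0) ∈ J ∧ (u, s) ∈ J ∧
      ∀ x ∈ J, x.1 ∈ N ∧ (∃ t ∈ Icc (0 : ℝ) 1, x.2 = s * t) ∧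
        (x.2 = 0 ∨ x.2 = s ∨ x.1 = u ∨ x.1 = v) := by
  obtain ⟨A, hAN, hA⟩ := hN.exists_isArc hu hv
  have h1 := (isArc_vertical u hs).trans (hA.prodMk s) (by
    rintro _ ⟨⟨t, -, rfl⟩, ⟨a, -, h⟩⟩
    simp only [Prod.mk.injEq] at h
    simp [← h.2])
  have h2 := h1.trans (isArc_vertical v hs).symm (by
    rintro _ ⟨⟨t, -, rfl⟩ | ⟨a, -, rfl⟩, ⟨t', -, h⟩⟩
    · simp only [Prod.mk.injEq] at h
      exact absurd h.1.symm huv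
    · simp only [Prod.mk.injEq] at h
      simp [h.1])
  refine ⟨_, h2.isJordanCurve_union (hA.prodMk 0) (by simpa using huv) ?_, ?_, ?_, ?_, ?_⟩
  · rintro _ ⟨(⟨t, -, rfl⟩ | ⟨a, -, rfl⟩) | ⟨t, -, rfl⟩, ⟨b, -, h⟩⟩ <;>
    simp only [Prod.mk.injEq] at h
    · simp [← h.2]
    · exact absurd h.2.symm hs
    · simp [← h.2]
  · exact Or.inr (hA.prodMk 0).left_mem
  · exact Or.inr (hA.prodMk 0).right_mem
  · exact Or.inl (Or.inl (Or.inl (isArc_vertical u hs).right_mem))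
  · rintro _ (((⟨t, ht, rfl⟩ | ⟨a, ha, rfl⟩) | ⟨t, ht, rfl⟩) | ⟨b, hb, rfl⟩)
    · exact ⟨hu, ⟨t, ht, rfl⟩, by simp⟩
    · exact ⟨hAN ha, ⟨1, by simp, by simp⟩, by simp⟩
    · exact ⟨hv, ⟨t, ht, rfl⟩, by simp⟩
    · exact ⟨hAN hb, ⟨0, by simp, by simp⟩, by simp⟩

theorem CyclicallyConnected.prod_zero [TopologicalSpace X] {N : Set X}
    (hN : CyclicallyConnected N) :
    CyclicallyConnected ((fun a : X => (a, (0 : ℝ))) '' N) := by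
  rintro _ ⟨x, hx, rfl⟩ _ ⟨y, hy, rfl⟩
  obtain ⟨J, hJN, ⟨e⟩, hxJ, hyJ⟩ := hN x hx y hy
  have hemb : IsEmbedding (fun a : X => (a, (0 : ℝ))) :=
    IsEmbedding.of_leftInverse (f := Prod.fst) (fun _ => rfl) continuous_fst (by fun_prop)
  exact ⟨_, image_mono hJN, ⟨e.trans (hemb.homeomorphImage J)⟩, mem_image_of_mem _ hxJ,
    mem_image_of_mem _ hyJ⟩

/-- A connected set containing a point above level `t` on a vertical line and a point below level
`t` crosses level `t` on this line, if all its points above level `t` lie on two such lines. -/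
theorem mem_of_isPreconnected_two_lines [TopologicalSpace X] [T1Space X] {C : Set (X × ℝ)}
    (hC : IsPreconnected C) {a a' : X} (haa' : a ≠ a') {s t : ℝ} (hst : t < s)
    (hs : (a, s) ∈ C) {w : X × ℝ} (hw : w ∈ C) (hwt : w.2 < t)
    (h : ∀ x ∈ C, t < x.2 → x.1 = a ∨ x.1 = a') : (a, t) ∈ C := by
  by_contra hat
  have hne : ∀ b : X, IsOpen {x : X × ℝ | x.1 ≠ b} := fun b =>
    isOpen_compl_singleton.preimage continuous_fst
  have hO₁ : IsOpen ({x : X × ℝ | t < x.2} ∩ {x | x.1 ≠ a'}) :=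
    (isOpen_lt continuous_const continuous_snd).inter (hne a')
  have hO₂ : IsOpen ({x : X × ℝ | x.2 < t} ∪ {x | x.1 ≠ a}) :=
    (isOpen_lt continuous_snd continuous_const).union (hne a)
  obtain ⟨x, hxC, ⟨hx1, hx2⟩, hx3⟩ := hC _ _ hO₁ hO₂ (by
    rintro ⟨x, r⟩ hx
    by_cases hxa : x = a
    · subst hxa
      rcases lt_trichotomy r t with hr | rfl | hr
      · exact Or.inr (Or.inl hr)
      · exact absurd hx hat
      · exact Or.inl ⟨hr, haa'⟩
    · exact Or.inr (Or.inr hxa)) ⟨_, hs, hst, haa'⟩ ⟨w, hw, Or.inl hwt⟩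
  rcases hx3 with hx3 | hx3
  · exact lt_asymm (show t < x.2 from hx1) hx3
  · rcases h x hxC hx1 with h | h
    exacts [hx3 h, hx2 h]

/-- The middle part of an arc from a top to a bottom handle. -/
theorem exists_crossing [TopologicalSpace X] [T2Space X] {B : Set (X × ℝ)} {u v d d' x y : X}
    (hB : IsArc B (x, 1) (y, -1)) (huv : u ≠ v) (hdd' : d ≠ d')
    (htop : ∀ x ∈ B, 0 < x.2 → x.2 < 1 → x.1 = u ∨ x.1 = v)
    (hbot : ∀ x ∈ B, x.2 < 0 → -1 < x.2 → x.1 = d ∨ x.1 = d') :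
    ∃ C ⊆ B, IsPathConnected C ∧ (∀ x ∈ C, |x.2| ≤ 1 / 2) ∧
      ∃ a e, (a = u ∨ a = v) ∧ (e = d ∨ e = d') ∧ (∀ t ∈ Icc (0 : ℝ) (1 / 2), (a, t) ∈ C) ∧
        ∀ t ∈ Icc (-(1 / 2) : ℝ) 0, (e, t) ∈ C := by
  have hK₁ : IsClosed {x : X × ℝ | 1 / 2 ≤ x.2} := isClosed_le continuous_const continuous_snd
  have hK₂ : IsClosed {x : X × ℝ | x.2 ≤ -(1 / 2)} := isClosed_le continuous_snd continuous_const
  obtain ⟨z, hz, C₁, _, hC₁, -, hC₁B, -, hC₁K⟩ := hB.symm.exists_first hK₁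
    ⟨(x, 1), hB.left_mem, by norm_num⟩
  obtain ⟨w, hw, C, _, hC, -, hCC₁, -, hCK⟩ := hC₁.symm.exists_first hK₂
    ⟨(y, -1), hC₁.left_mem, by norm_num⟩
  have hCsub : C ⊆ C₁ := hCC₁ ▸ subset_union_left
  have hCB : C ⊆ B := hCsub.trans (hC₁B ▸ subset_union_left)
  have htop' : ∀ x ∈ C, 1 / 2 ≤ x.2 → x = z := fun x hx h => by
    have : x ∈ C₁ ∩ {x : X × ℝ | 1 / 2 ≤ x.2} := ⟨hCsub hx, h⟩
    rwa [hC₁K] at this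
  have hbot' : ∀ x ∈ C, x.2 ≤ -(1 / 2) → x = w := fun x hx h => by
    have : x ∈ C ∩ {x : X × ℝ | x.2 ≤ -(1 / 2)} := ⟨hx, h⟩
    rwa [hCK] at this
  have hord : OrdConnected (Prod.snd '' C) :=
    (hC.isPreconnected.image _ continuous_snd.continuousOn).ordConnected
  have hz' : (1 / 2 : ℝ) ≤ z.2 := hz
  have hw' : w.2 ≤ (-(1 / 2) : ℝ) := hw
  have hz2 : z.2 = 1 / 2 := by
    obtain ⟨x, hx, hx2⟩ := hord.out ⟨w, hC.right_mem, rfl⟩ ⟨z, hC.left_mem, rfl⟩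
      (show (1 / 2 : ℝ) ∈ Icc w.2 z.2 from ⟨by linarith, hz'⟩)
    rw [← htop' x hx hx2.ge, hx2]
  have hw2 : w.2 = -(1 / 2) := by
    obtain ⟨x, hx, hx2⟩ := hord.out ⟨w, hC.right_mem, rfl⟩ ⟨z, hC.left_mem, rfl⟩
      (show (-(1 / 2) : ℝ) ∈ Icc w.2 z.2 from ⟨hw', by linarith⟩)
    rw [← hbot' x hx hx2.le, hx2]
  have habs : ∀ x ∈ C, |x.2| ≤ 1 / 2 := fun x hx => by
    rw [abs_le]
    constructor
    · by_contra h
      have := hbot' x hx (not_le.1 h).le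
      rw [this, hw2] at h
      exact h le_rfl
    · by_contra h
      have := htop' x hx (not_le.1 h).le
      rw [this, hz2] at h
      exact h le_rfl
  have hneg : ∀ {x : X} {t : ℝ}, (x, t) ∈ (fun x : X × ℝ => (x.1, -x.2)) '' C → (x, -t) ∈ C := by
    rintro x t ⟨⟨x', t'⟩, h, h'⟩
    simp only [Prod.mk.injEq] at h'
    obtain ⟨rfl, rfl⟩ := h'
    simpa using h
  refine ⟨C, hCB, hC.isPathConnected, habs, z.1, w.1,
    htop z (hCB hC.left_mem) (by rw [hz2]; norm_num) (by rw [hz2]; norm_num),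
    hbot w (hCB hC.right_mem) (by rw [hw2]; norm_num) (by rw [hw2]; norm_num), ?_, ?_⟩
  · have hzm : (z.1, (1 / 2 : ℝ)) ∈ C := by
      rw [← hz2]
      exact hC.left_mem
    intro t ht
    rcases ht.2.eq_or_lt with rfl | ht2
    · exact hzm
    obtain ⟨a', ha', haa'⟩ : ∃ a', z.1 ≠ a' ∧ ∀ b, (b = u ∨ b = v) → b = z.1 ∨ b = a' := by
      rcases htop z (hCB hC.left_mem) (by rw [hz2]; norm_num) (by rw [hz2]; norm_num) with h | h
      · exact ⟨v, h ▸ huv, fun b hb => by rw [h]; exact hb⟩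
      · exact ⟨u, h ▸ huv.symm, fun b hb => by rw [h]; exact hb.symm⟩
    refine mem_of_isPreconnected_two_lines hC.isPreconnected ha' ht2 hzm hC.right_mem
      (by rw [hw2]; linarith [ht.1]) fun x hx hxt => haa' _ (htop x (hCB hx) ?_ ?_)
    · linarith [ht.1]
    · linarith [(abs_le.1 (habs x hx)).2]
  · have hwm : (w.1, (1 / 2 : ℝ)) ∈ (fun x : X × ℝ => (x.1, -x.2)) '' C :=
      ⟨w, hC.right_mem, by simp [hw2]⟩
    intro t ht
    rcases ht.1.eq_or_lt with rfl | ht2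
    · exact hneg hwm
    obtain ⟨a', ha', haa'⟩ : ∃ a', w.1 ≠ a' ∧ ∀ b, (b = d ∨ b = d') → b = w.1 ∨ b = a' := by
      rcases hbot w (hCB hC.right_mem) (by rw [hw2]; norm_num) (by rw [hw2]; norm_num) with h | h
      · exact ⟨d', h ▸ hdd', fun b hb => by rw [h]; exact hb⟩
      · exact ⟨d, h ▸ hdd'.symm, fun b hb => by rw [h]; exact hb.symm⟩
    have := mem_of_isPreconnected_two_lines (t := -t)
      (hC.isPreconnected.image (fun x : X × ℝ => (x.1, -x.2)) (by fun_prop)) ha'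
      (by linarith) hwm (mem_image_of_mem _ hC.left_mem)
      (by simp only [hz2]; linarith [ht.2]) (by
        rintro _ ⟨x, hx, rfl⟩ hxt
        simp only at hxt
        refine haa' _ (hbot x (hCB hx) ?_ ?_)
        · linarith [ht.2]
        · linarith [(abs_le.1 (habs x hx)).1])
    simpa using hneg this

/-- Two points of a cyclicly connected set are linked by disjoint arcs to two others. -/
theorem CyclicallyConnected.exists_linkage [MetricSpace X] {N : Set X}
    (hN : CyclicallyConnected N) {u v d d' : X} (hu : u ∈ N) (hv : v ∈ N) (huv : u ≠ v)
    (hd : d ∈ N) (hd' : d' ∈ N) (hdd' : d ≠ d') :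
    ∃ P Q a b, P ⊆ N ∧ Q ⊆ N ∧ IsArc P u a ∧ IsArc Q v b ∧ Disjoint P Q ∧
      (a = d ∨ a = d') ∧ (b = d ∨ b = d') := by
  obtain ⟨J, hJ, huJ, hvJ, huJ₁, hJN⟩ := hN.exists_handle hu hv huv one_ne_zero
  obtain ⟨J', hJ', hdJ, hdJ', hdJ₁, hJN'⟩ :=
    hN.exists_handle hd hd' hdd' (neg_ne_zero.2 (one_ne_zero (α := ℝ)))
  set N₀ : Set (X × ℝ) := (fun a : X => (a, (0 : ℝ))) '' N with hN₀
  have hM : CyclicallyConnected (J' ∪ (J ∪ N₀)) :=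
    (hN.prod_zero.union_jordan hJ (p := (u, 0)) (q := (v, 0)) (by simpa using huv) huJ ⟨u, hu, rfl⟩
      hvJ ⟨v, hv, rfl⟩).union_jordan hJ' (p := (d, 0)) (q := (d', 0)) (by simpa using hdd') hdJ
      (Or.inr ⟨d, hd, rfl⟩) hdJ' (Or.inr ⟨d', hd', rfl⟩)
  have hMN : ∀ x ∈ J' ∪ (J ∪ N₀), x.1 ∈ N := by
    rintro x (h | h | ⟨y, hy, rfl⟩)
    exacts [(hJN' x h).1, (hJN x h).1, hy]
  have hMtop : ∀ x ∈ J' ∪ (J ∪ N₀), 0 < x.2 → x.2 < 1 → x.1 = u ∨ x.1 = v := by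
    rintro x (h | h | ⟨y, hy, rfl⟩) h0 h1
    · obtain ⟨t, ht, ht'⟩ := (hJN' x h).2.1
      linarith [ht.1]
    · rcases (hJN x h).2.2 with h | h | h
      exacts [absurd h h0.ne', absurd h h1.ne, h]
    · exact absurd h0 (lt_irrefl _)
  have hMbot : ∀ x ∈ J' ∪ (J ∪ N₀), x.2 < 0 → -1 < x.2 → x.1 = d ∨ x.1 = d' := by
    rintro x (h | h | ⟨y, hy, rfl⟩) h0 h1
    · rcases (hJN' x h).2.2 with h | h | h
      exacts [absurd h h0.ne, absurd h h1.ne', h]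
    · obtain ⟨t, ht, ht'⟩ := (hJN x h).2.1
      linarith [ht.1]
    · exact absurd h0 (lt_irrefl _)
  obtain ⟨J₀, hJ₀M, hJ₀, h1, h2⟩ := hM (u, 1) (Or.inr (Or.inl huJ₁)) (d, -1) (Or.inl hdJ₁)
  obtain ⟨B, B', hB, hB', hBJ₀, hBB'⟩ := hJ₀.exists_arcs h1 h2
    (fun h => by have := congrArg Prod.snd h; norm_num at this)
  have hBM : B ⊆ J' ∪ (J ∪ N₀) := (hBJ₀ ▸ subset_union_left).trans hJ₀M
  have hBM' : B' ⊆ J' ∪ (J ∪ N₀) := (hBJ₀ ▸ subset_union_right).trans hJ₀M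
  obtain ⟨C, hCB, hC, hCh, a, e, ha, he, haC, heC⟩ := exists_crossing hB huv hdd'
    (fun x hx => hMtop x (hBM hx)) (fun x hx => hMbot x (hBM hx))
  obtain ⟨C', hCB', hC', hCh', a', e', ha', he', haC', heC'⟩ := exists_crossing hB' huv hdd'
    (fun x hx => hMtop x (hBM' hx)) (fun x hx => hMbot x (hBM' hx))
  have hdisj : ∀ x, x ∈ C → x ∉ C' := by
    intro x hx hx'
    have : x ∈ B ∩ B' := ⟨hCB hx, hCB' hx'⟩
    rw [hBB'] at this
    have h := hCh x hx
    rcases this with rfl | rfl <;> norm_num at h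
  have haa' : a ≠ a' := by
    rintro rfl
    exact hdisj _ (haC 0 (by norm_num)) (haC' 0 (by norm_num))
  have hee' : e ≠ e' := by
    rintro rfl
    exact hdisj _ (heC 0 (by norm_num)) (heC' 0 (by norm_num))
  have hC0 : ∀ x ∈ C, (0 < x.2 → (x.1 = a ∨ x.1 = a')) ∧ (x.2 < 0 → (x.1 = e ∨ x.1 = e')) := by
    intro x hx
    have h := abs_le.1 (hCh x hx)
    have h1 := hMtop x (hBM (hCB hx))
    have h2 := hMbot x (hBM (hCB hx))
    constructor
    · intro h0
      have := h1 h0 (by linarith)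
      clear * - this ha ha' haa'
      grind
    · intro h0
      have := h2 h0 (by linarith)
      clear * - this he he' hee'
      grind
  have hC0' : ∀ x ∈ C', (0 < x.2 → (x.1 = a ∨ x.1 = a')) ∧ (x.2 < 0 → (x.1 = e ∨ x.1 = e')) := by
    intro x hx
    have h := abs_le.1 (hCh' x hx)
    have h1 := hMtop x (hBM' (hCB' hx))
    have h2 := hMbot x (hBM' (hCB' hx))
    constructor
    · intro h0
      have := h1 h0 (by linarith)
      clear * - this ha ha' haa'
      grind
    · intro h0
      have := h2 h0 (by linarith)
      clear * - this he he' hee'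
      grind
  have hproj : ∀ x h h', (x, h) ∈ C → (x, h') ∈ C' → False := by
    intro x h h' hx hx'
    have k1 := hC0 _ hx
    have k2 := hC0' _ hx'
    have k3 := abs_le.1 (hCh _ hx)
    have k4 := abs_le.1 (hCh' _ hx')
    simp only [mem_Icc] at k1 k2 k3 k4 haC haC' heC heC'
    have z1 := haC 0 (by norm_num)
    have z2 := haC' 0 (by norm_num)
    have z3 := heC 0 (by norm_num)
    have z4 := heC' 0 (by norm_num)
    rcases lt_trichotomy h 0 with hh | hh | hh <;> rcases lt_trichotomy h' 0 with hh' | hh' | hh' <;>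
      grind
  have hjoin : JoinedIn (Prod.fst '' C) a e :=
    (hC.image continuous_fst).joinedIn _ ⟨_, haC 0 (by norm_num), rfl⟩ _
      ⟨_, heC 0 (by norm_num), rfl⟩
  have hjoin' : JoinedIn (Prod.fst '' C') a' e' :=
    (hC'.image continuous_fst).joinedIn _ ⟨_, haC' 0 (by norm_num), rfl⟩ _
      ⟨_, heC' 0 (by norm_num), rfl⟩
  obtain ⟨P, hPC, hP⟩ := hjoin.exists_isArc
  obtain ⟨Q, hQC, hQ⟩ := hjoin'.exists_isArc
  have hPN : P ⊆ N := by
    intro p hp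
    obtain ⟨x, hx, rfl⟩ := hPC hp
    exact hMN x (hBM (hCB hx))
  have hQN : Q ⊆ N := by
    intro p hp
    obtain ⟨x, hx, rfl⟩ := hQC hp
    exact hMN x (hBM' (hCB' hx))
  have hPQ : Disjoint P Q := by
    rw [Set.disjoint_left]
    intro p hp hq
    obtain ⟨⟨x, h⟩, hx, rfl⟩ := hPC hp
    obtain ⟨⟨y, h'⟩, hy, hxy⟩ := hQC hq
    obtain rfl : y = x := hxy
    exact hproj _ _ _ hx hy
  rcases ha with rfl | rfl
  · obtain rfl : a' = v := ha'.resolve_left haa'.symm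
    exact ⟨P, Q, e, e', hPN, hQN, hP, hQ, hPQ, he, he'⟩
  · obtain rfl : a' = u := ha'.resolve_right haa'.symm
    exact ⟨Q, P, e', e, hQN, hPN, hQ, hP, hPQ.symm, he', he⟩

/-- Two points of a cyclicly connected set are linked by disjoint arcs to a closed set that shares
two points with it. -/
theorem CyclicallyConnected.exists_linkage_closed [MetricSpace X] {N D : Set X}
    (hN : CyclicallyConnected N) (hD : IsClosed D) {u v d d' : X} (hu : u ∈ N) (hv : v ∈ N)
    (huv : u ≠ v) (hd : d ∈ N) (hd' : d' ∈ N) (hdd' : d ≠ d') (hdD : d ∈ D) (hdD' : d' ∈ D) :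
    ∃ P Q a b, P ⊆ N ∧ Q ⊆ N ∧ IsArc P u a ∧ IsArc Q v b ∧ Disjoint P Q ∧
      P ∩ D = {a} ∧ Q ∩ D = {b} := by
  obtain ⟨P, Q, a, b, hPN, hQN, hP, hQ, hPQ, ha, hb⟩ := hN.exists_linkage hu hv huv hd hd' hdd'
  have haD : a ∈ D := by rcases ha with rfl | rfl <;> assumption
  have hbD : b ∈ D := by rcases hb with rfl | rfl <;> assumption
  obtain ⟨a', -, P₁, _, hP₁, -, hPP₁, -, hP₁D⟩ := hP.exists_first hD ⟨a, hP.right_mem, haD⟩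
  obtain ⟨b', -, Q₁, _, hQ₁, -, hQQ₁, -, hQ₁D⟩ := hQ.exists_first hD ⟨b, hQ.right_mem, hbD⟩
  have hP₁P : P₁ ⊆ P := hPP₁ ▸ subset_union_left
  have hQ₁Q : Q₁ ⊆ Q := hQQ₁ ▸ subset_union_left
  exact ⟨P₁, Q₁, a', b', hP₁P.trans hPN, hQ₁Q.trans hQN, hP₁, hQ₁, hPQ.mono hP₁P hQ₁Q, hP₁D, hQ₁D⟩

end Linking

theorem IsPreconnected.inter_frontier_nonempty_of_isOpen {X : Type} [TopologicalSpace X]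
    {C U : Set X} (hC : IsPreconnected C) (hU : IsOpen U) {x y : X} (hx : x ∈ C) (hxU : x ∈ U)
    (hy : y ∈ C) (hyU : y ∉ U) : (C ∩ frontier U).Nonempty := by
  by_contra h
  have hfr : ∀ z ∈ C, z ∉ frontier U := fun z hz hz' => h ⟨z, hz, hz'⟩
  rw [hU.frontier_eq] at hfr
  obtain ⟨z, -, hz, hz'⟩ := hC U (closure U)ᶜ hU isClosed_closure.isOpen_compl
    (fun z hz => by
      by_cases hzU : z ∈ U
      · exact Or.inl hzU
      · exact Or.inr fun hcl => hfr z hz ⟨hcl, hzU⟩)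
    ⟨x, hx, hxU⟩ ⟨y, hy, fun hcl => hfr y hy ⟨hcl, hyU⟩⟩
  exact hz' (subset_closure hz)

section Approach

variable {X : Type} [MetricSpace X]

/-- A parametrized arc that starts at a point outside a cyclicly connected set and then runs
inside it. -/
structure IsApproach (T : Set X) (γ : ℝ → X) (L : ℝ) : Prop where
  pos : 0 < L
  continuous : Continuous γ
  injOn : InjOn γ (Icc 0 L)
  notMem : γ 0 ∉ T
  mem : ∀ t ∈ Ioc 0 L, γ t ∈ T

variable {T : Set X} {γ : ℝ → X} {L : ℝ}

theorem IsApproach.ne (h : IsApproach T γ L) {s t : ℝ} (hs : s ∈ Icc 0 L) (ht : t ∈ Icc 0 L)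
    (hst : s ≠ t) : γ s ≠ γ t := fun e => hst (h.injOn hs ht e)

theorem IsApproach.joinedIn (h : IsApproach T γ L) {W : Set X} {δ : ℝ} (hδ : δ ≤ L)
    (hW : γ '' Icc 0 δ ⊆ W) {s : ℝ} (hs : 0 < s) (hsδ : s ≤ δ) :
    JoinedIn (W \ {γ 0}) (γ s) (γ δ) := by
  have hpc : IsPathConnected (γ '' Icc s δ) :=
    ((convex_Icc s δ).isPathConnected ⟨s, left_mem_Icc.2 hsδ⟩).image h.continuous
  refine (hpc.joinedIn _ ⟨s, left_mem_Icc.2 hsδ, rfl⟩ _ ⟨δ, right_mem_Icc.2 hsδ, rfl⟩).mono ?_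
  rintro _ ⟨t, ht, rfl⟩
  have ht0 : 0 < t := hs.trans_le ht.1
  exact ⟨hW ⟨t, ⟨ht0.le, ht.2⟩, rfl⟩,
    h.ne ⟨ht0.le, ht.2.trans hδ⟩ (left_mem_Icc.2 h.pos.le) ht0.ne'⟩

end Approach

section Accumulation

variable {X : Type} [MetricSpace X] [LocallyPathConnectedSpace X]

theorem exists_isPathConnected_nhds {p : X} {U : Set X} (hU : U ∈ 𝓝 p) :
    ∃ N ∈ 𝓝 p, IsPathConnected N ∧ N ⊆ U := by
  obtain ⟨N, hN, h⟩ := (LocallyPathConnectedSpace.path_connected_basis p).mem_iff.1 hU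
  exact ⟨N, hN.1, hN.2, h⟩

/-- A limit point of a maximal cyclic set is the end of an arc whose other points are in this
set. -/
theorem MaximalCyclic.exists_isArc_to_limit {T : Set X} (hT : MaximalCyclic T) {p : X}
    (hp : p ∈ closure T) (hpT : p ∉ T) :
    ∃ A t, IsArc A p t ∧ p ≠ t ∧ A \ {p} ⊆ T := by
  obtain ⟨N₀, hN₀, hN₀c, -⟩ := exists_isPathConnected_nhds (p := p) univ_mem
  obtain ⟨t₀, ht₀N, ht₀⟩ := mem_closure_iff_nhds.1 hp N₀ hN₀
  obtain ⟨A, -, hA⟩ := (hN₀c.joinedIn t₀ ht₀N p (mem_of_mem_nhds hN₀)).exists_isArc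
  refine ⟨A, t₀, hA.symm, fun h => hpT (h ▸ ht₀), ?_⟩
  rintro x ⟨hxA, hxp⟩
  obtain ⟨A₁, A₂, hA₁, hA₂, hA₁₂, hA₁A₂⟩ := hA.split hxA
  have hpA₁ : p ∉ A₁ := fun h => by
    have : p ∈ A₁ ∩ A₂ := ⟨h, hA₂.right_mem⟩
    rw [hA₁A₂] at this
    exact hxp (Eq.symm this)
  obtain ⟨r, hr, hrA₁⟩ := nhds_basis_closedBall.mem_iff.1
    (hA₁.isCompact.isClosed.isOpen_compl.mem_nhds hpA₁)
  obtain ⟨N, hN, hNc, hNr⟩ := exists_isPathConnected_nhds (closedBall_mem_nhds p hr)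
  obtain ⟨t, htN, ht⟩ := mem_closure_iff_nhds.1 hp N hN
  have hjoin : JoinedIn (A ∪ N) t₀ t :=
    (hA.joinedIn.mono subset_union_left).trans
      ((hNc.joinedIn p (mem_of_mem_nhds hN) t htN).mono subset_union_right)
  obtain ⟨B, hBA, hB⟩ := hjoin.exists_isArc
  obtain ⟨w, hwB, hw₁, hw₂⟩ := isPreconnected_closed_iff.1 hB.isPreconnected A₁
    (A₂ ∪ closedBall p r) hA₁.isCompact.isClosed (hA₂.isCompact.isClosed.union isClosed_closedBall)
    (fun w hw => by
      rcases hBA hw with h | h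
      · rw [← hA₁₂] at h
        exact h.imp_right Or.inl
      · exact Or.inr (Or.inr (hNr h)))
    ⟨t₀, hB.left_mem, hA₁.left_mem⟩ ⟨t, hB.right_mem, Or.inr (hNr htN)⟩
  have hwx : w = x := by
    rcases hw₂ with h | h
    · have : w ∈ A₁ ∩ A₂ := ⟨hw₁, h⟩
      rwa [hA₁A₂] at this
    · exact absurd hw₁ (hrA₁ h)
  exact hT.arc_subset hB ht₀ ht (hwx ▸ hwB)

theorem MaximalCyclic.exists_isApproach {T : Set X} (hT : MaximalCyclic T) {p : X}
    (hp : p ∈ closure T) (hpT : p ∉ T) : ∃ γ L, IsApproach T γ L ∧ γ 0 = p := by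
  obtain ⟨A, t, hA, hpt, hAT⟩ := hT.exists_isArc_to_limit hp hpT
  obtain ⟨γ, L, hL, hc, hi, h0, h1, him⟩ := hA.exists_param 0
  have hL' : 0 < L := hL.lt_of_ne (by rintro rfl; exact hpt (h0.symm.trans h1))
  have heq : ∀ t ∈ Icc 0 L, IccExtend hL (domRestrict (Icc 0 L) γ) t = γ t := fun t ht => by
    rw [IccExtend_of_mem hL _ ht]
    rfl
  have h00 : IccExtend hL (domRestrict (Icc 0 L) γ) 0 = p := by
    rw [heq 0 (left_mem_Icc.2 hL), h0]
  refine ⟨IccExtend hL (domRestrict (Icc 0 L) γ), L, ⟨hL', ?_, ?_, h00 ▸ hpT, ?_⟩, h00⟩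
  · exact (continuousOn_iff_continuous_domRestrict.1 hc).Icc_extend'
  · exact hi.congr fun t ht => (heq t ht).symm
  · intro t ht
    have ht' : t ∈ Icc 0 L := Ioc_subset_Icc_self ht
    rw [heq t ht']
    refine hAT ⟨him ▸ mem_image_of_mem γ ht', fun h => ht.1.ne' ?_⟩
    exact hi ht' (left_mem_Icc.2 hL) (h.trans h0.symm)

variable {T : Set X} {γ : ℝ → X} {L : ℝ}

/-- Near the start of an approach, each of its points can be bypassed. -/
theorem IsApproach.eventually_joinedIn [CompactSpace X] (h : IsApproach T γ L)
    (hT : CyclicallyConnected T) {W : Set X} (hW : IsOpen W) {δ : ℝ} (hδ₀ : 0 < δ) (hδ : δ ≤ L)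
    (hγW : γ '' Icc 0 δ ⊆ W) :
    ∀ᶠ z in 𝓝[>] (0 : ℝ), JoinedIn (W \ {γ 0, γ z}) (γ (z / 2)) (γ δ) := by
  have hpW : γ 0 ∈ W := hγW ⟨0, ⟨le_rfl, hδ₀.le⟩, rfl⟩
  obtain ⟨r, hr, hrW⟩ := nhds_basis_closedBall.mem_iff.1 (hW.mem_nhds hpW)
  have hBW : closure (ball (γ 0) r) ⊆ W := closure_ball_subset_closedBall.trans hrW
  have hpS : γ 0 ∉ frontier (ball (γ 0) r) := by
    rw [isOpen_ball.frontier_eq]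
    exact fun hp => hp.2 (mem_ball_self hr)
  have key : ∀ᶠ z in 𝓝 (0 : ℝ), ∀ w ∈ frontier (ball (γ 0) r), JoinedIn (W \ {γ 0}) w (γ δ) →
      JoinedIn (W \ {γ 0, γ z}) w (γ δ) := by
    refine IsCompact.eventually_forall_of_forall_eventually isClosed_frontier.isCompact ?_
    intro w hw
    have hwp : w ≠ γ 0 := fun e => hpS (e ▸ hw)
    have hd : 0 < dist w (γ 0) / 2 := half_pos (dist_pos.2 hwp)
    obtain ⟨N, hN, hNc, hNW⟩ := exists_isPathConnected_nhds
      (inter_mem (hW.mem_nhds (hBW (frontier_subset_closure hw))) (ball_mem_nhds w hd))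
    have hNp : γ 0 ∉ N := fun hp => by
      have := (hNW hp).2
      rw [mem_ball, dist_comm] at this
      linarith
    by_cases hjw : JoinedIn (W \ {γ 0}) w (γ δ)
    · obtain ⟨σ, hσ⟩ := hjw
      have hσc : IsClosed (range σ) := (isCompact_range σ.continuous).isClosed
      have h1 : ∀ᶠ z in 𝓝 (0 : ℝ), γ z ∉ range σ :=
        h.continuous.continuousAt.eventually
          (hσc.isOpen_compl.mem_nhds (by rintro ⟨t, ht⟩; exact (hσ t).2 ht))
      have h2 : ∀ᶠ z in 𝓝 (0 : ℝ), γ z ∈ ball (γ 0) (dist w (γ 0) / 2) :=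
        h.continuous.continuousAt.eventually (ball_mem_nhds _ hd)
      rw [nhds_prod_eq]
      filter_upwards [prod_mem_prod (h1.and h2) hN] with ⟨z, w'⟩ ⟨⟨hz1, hz2⟩, hw'⟩ _
      refine ((hNc.joinedIn w' hw' w (mem_of_mem_nhds hN)).mono ?_).trans ⟨σ, fun t => ?_⟩
      · intro x hx
        refine ⟨(hNW hx).1, ?_⟩
        rintro (rfl | rfl)
        · exact hNp hx
        · have h3 := (hNW hx).2
          rw [mem_ball, dist_comm] at h3
          rw [mem_ball] at hz2
          linarith [dist_triangle w (γ z) (γ 0)]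
      · refine ⟨(hσ t).1, ?_⟩
        rintro (e | e)
        · exact (hσ t).2 e
        · exact hz1 ⟨t, e⟩
    · rw [nhds_prod_eq]
      filter_upwards [prod_mem_prod univ_mem hN] with ⟨z, w'⟩ ⟨_, hw'⟩ hj
      refine absurd (JoinedIn.trans ?_ hj) hjw
      exact (hNc.joinedIn w (mem_of_mem_nhds hN) w' hw').mono fun x hx =>
        ⟨(hNW hx).1, fun e => hNp (e ▸ hx)⟩
  have hhalf : ∀ᶠ z in 𝓝 (0 : ℝ), γ (z / 2) ∈ ball (γ 0) r := by
    have : Tendsto (fun z : ℝ => γ (z / 2)) (𝓝 0) (𝓝 (γ 0)) := by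
      have hc : Continuous fun z : ℝ => γ (z / 2) := h.continuous.comp (by fun_prop)
      simpa using hc.tendsto 0
    exact this.eventually (ball_mem_nhds _ hr)
  filter_upwards [nhdsWithin_le_nhds key, nhdsWithin_le_nhds hhalf, self_mem_nhdsWithin,
    nhdsWithin_le_nhds (Iio_mem_nhds hδ₀)] with z hz hzB hz0 hzδ
  have hz0' : 0 < z := hz0
  have hzδ' : z < δ := hzδ
  have hmem : ∀ t, 0 ≤ t → t ≤ δ → t ∈ Icc 0 L := fun t h0 h1 => ⟨h0, h1.trans hδ⟩
  by_contra hnot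
  have hO : IsOpen (W \ {γ 0, γ z}) :=
    hW.sdiff ((finite_singleton (γ z)).insert (γ 0)).isClosed
  have hz2O : γ (z / 2) ∈ W \ {γ 0, γ z} := by
    refine ⟨hγW ⟨z / 2, ⟨by linarith, by linarith⟩, rfl⟩, ?_⟩
    rintro (e | e)
    · exact h.ne (hmem _ (by linarith) (by linarith)) (hmem _ le_rfl hδ₀.le) (by linarith) e
    · exact h.ne (hmem _ (by linarith) (by linarith)) (hmem _ hz0'.le hzδ'.le) (by linarith) e
  have hCo := hO.pathComponentIn (γ (z / 2))
  have hCc := isPathConnected_pathComponentIn hz2O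
  obtain ⟨w, hwC, hwS⟩ : (pathComponentIn (W \ {γ 0, γ z}) (γ (z / 2)) ∩
      frontier (ball (γ 0) r)).Nonempty := by
    by_contra hemp
    have hCB : pathComponentIn (W \ {γ 0, γ z}) (γ (z / 2)) ⊆ ball (γ 0) r := by
      intro w hw
      by_contra hwB
      exact hemp (hCc.isConnected.isPreconnected.inter_frontier_nonempty_of_isOpen isOpen_ball
        (mem_pathComponentIn_self hz2O) hzB hw hwB)
    obtain ⟨q, hqT, hq⟩ := (hT.isPreconnected_diff_singleton
      (γ z)).inter_frontier_nonempty_of_isOpen hCo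
      ⟨h.mem (z / 2) ⟨by linarith, by linarith⟩, fun e => hz2O.2 (Or.inr e)⟩
      (mem_pathComponentIn_self hz2O)
      ⟨h.mem δ ⟨hδ₀, hδ⟩, h.ne (hmem _ hδ₀.le le_rfl) (hmem _ hz0'.le hzδ'.le) hzδ'.ne'⟩ hnot
    have hqO : q ∈ W \ {γ 0, γ z} := by
      refine ⟨hBW (closure_mono hCB (frontier_subset_closure hq)), ?_⟩
      rintro (rfl | e)
      · exact h.notMem hqT.1
      · exact hqT.2 e
    rw [hCo.frontier_eq] at hq
    obtain ⟨q', hq'q, hq'⟩ := mem_closure_iff.1 hq.1 _ (hO.pathComponentIn q)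
      (mem_pathComponentIn_self hqO)
    exact hq.2 (JoinedIn.trans hq' (JoinedIn.symm hq'q))
  refine hnot (JoinedIn.trans hwC (hz w hwS ?_))
  refine ((JoinedIn.symm hwC).mono ?_).trans (h.joinedIn hδ hγW (by linarith) (by linarith))
  exact sdiff_subset_sdiff_right (singleton_subset_iff.2 (Or.inl rfl))

end Accumulation

section Bridges

variable {X : Type} [MetricSpace X] {T : Set X} {γ : ℝ → X} {L : ℝ}

theorem IsApproach.isArc (h : IsApproach T γ L) {x y : ℝ} (hx : 0 ≤ x) (hxy : x ≤ y)
    (hy : y ≤ L) : IsArc (γ '' Icc x y) (γ x) (γ y) :=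
  ⟨γ, x, y, hxy, h.continuous.continuousOn, h.injOn.mono (Icc_subset_Icc hx hy), rfl, rfl, rfl⟩

theorem IsApproach.exists_bridge (h : IsApproach T γ L) {W : Set X} {δ z : ℝ} (hz₀ : 0 < z)
    (hzδ : z < δ) (hδ : δ ≤ L) (hγW : γ '' Icc 0 δ ⊆ W)
    (hj : JoinedIn (W \ {γ 0, γ z}) (γ (z / 2)) (γ δ)) :
    ∃ J x y, IsJordanCurve J ∧ J ⊆ W \ {γ 0} ∧ 0 < x ∧ x < z ∧ z < y ∧ y ≤ δ ∧
      γ '' Icc x y ⊆ J := by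
  obtain ⟨B, hBW, hB⟩ := hj.exists_isArc
  have hK : ∀ a b, IsClosed (γ '' Icc a b) := fun a b =>
    (isCompact_Icc.image h.continuous).isClosed
  obtain ⟨_, ⟨x, hx, rfl⟩, C₁, _, hC₁, -, hC₁B, -, hC₁K⟩ := hB.symm.exists_first (hK 0 z)
    ⟨γ (z / 2), hB.left_mem, z / 2, ⟨by linarith, by linarith⟩, rfl⟩
  obtain ⟨_, ⟨y, hy, rfl⟩, C, _, hC, -, hCC₁, -, hCK⟩ := hC₁.symm.exists_first (hK z δ)
    ⟨γ δ, hC₁.left_mem, δ, ⟨by linarith, by linarith⟩, rfl⟩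
  have hCsub : C ⊆ C₁ := hCC₁ ▸ subset_union_left
  have hCW : C ⊆ W \ {γ 0, γ z} := (hCsub.trans (hC₁B ▸ subset_union_left)).trans hBW
  have hx0 : 0 < x := hx.1.lt_of_ne (by rintro rfl; exact (hCW hC.left_mem).2 (Or.inl rfl))
  have hxz : x < z := hx.2.lt_of_ne (by rintro rfl; exact (hCW hC.left_mem).2 (Or.inr rfl))
  have hzy : z < y := hy.1.lt_of_ne (by rintro rfl; exact (hCW hC.right_mem).2 (Or.inr rfl))
  have hyL : y ≤ L := hy.2.trans hδ
  have hxy : x < y := hxz.trans hzy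
  refine ⟨C ∪ γ '' Icc x y, x, y, hC.isJordanCurve_union (h.isArc hx0.le hxy.le hyL)
    (h.ne ⟨hx.1, by linarith⟩ ⟨by linarith, hyL⟩ hxy.ne) ?_, union_subset ?_ ?_, hx0, hxz, hzy, hy.2,
    subset_union_right⟩
  · rintro _ ⟨htC, ⟨t, ht, rfl⟩⟩
    rcases le_total t z with htz | htz
    · have : γ t ∈ C₁ ∩ γ '' Icc 0 z := ⟨hCsub htC, t, ⟨hx0.le.trans ht.1, htz⟩, rfl⟩
      rw [hC₁K] at this
      exact Or.inl this
    · have : γ t ∈ C ∩ γ '' Icc z δ := ⟨htC, t, ⟨htz, ht.2.trans hy.2⟩, rfl⟩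
      rw [hCK] at this
      exact Or.inr this
  · exact hCW.trans (sdiff_subset_sdiff_right (singleton_subset_iff.2 (Or.inl rfl)))
  · rintro _ ⟨t, ht, rfl⟩
    have ht0 : 0 < t := hx0.trans_le ht.1
    exact ⟨hγW ⟨t, ⟨ht0.le, ht.2.trans hy.2⟩, rfl⟩,
      h.ne ⟨ht0.le, ht.2.trans hyL⟩ ⟨le_rfl, h.pos.le⟩ ht0.ne'⟩

/-- Overlapping bridges over an interval merge to a cyclicly connected set. -/
theorem IsApproach.exists_cyclic_of_bridges (h : IsApproach T γ L) {W : Set X} {a b : ℝ}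
    (hab : a ≤ b)
    (hJ : ∀ z ∈ Icc a b, ∃ J x y, IsJordanCurve J ∧ J ⊆ W ∧ 0 < x ∧ x < z ∧ z < y ∧ y ≤ L ∧
      γ '' Icc x y ⊆ J) :
    ∃ K, IsCompact K ∧ CyclicallyConnected K ∧ K ⊆ W ∧ γ '' Icc a b ⊆ K := by
  choose! J x y hJ hJW hx0 hxz hzy hyL hγJ using hJ
  obtain ⟨t, ht0, htm, ⟨m, hm⟩, ht⟩ := exists_monotone_Icc_subset_open_cover_Icc hab
    (c := fun z : Icc a b => {s : Icc a b | (s : ℝ) ∈ Ioo (x z) (y z)})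
    (fun z => isOpen_Ioo.preimage continuous_subtype_val)
    (fun z _ => mem_iUnion.2 ⟨z, hxz z z.2, hzy z z.2⟩)
  have key : ∀ n, ∃ K, IsCompact K ∧ CyclicallyConnected K ∧ K ⊆ W ∧
      ∃ x' y', 0 < x' ∧ x' < a ∧ (t n : ℝ) < y' ∧ y' ≤ L ∧ γ '' Icc x' y' ⊆ K := by
    intro n
    induction n with
    | zero =>
      have ha : a ∈ Icc a b := left_mem_Icc.2 hab
      exact ⟨J a, (hJ a ha).isCompact, (hJ a ha).cyclicallyConnected, hJW a ha, x a, y a, hx0 a ha,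
        hxz a ha, by rw [ht0]; exact hzy a ha, hyL a ha, hγJ a ha⟩
    | succ n ih =>
      obtain ⟨K, hK, hKc, hKW, x', y', hx', hx'a, hy', hy'L, hγK⟩ := ih
      obtain ⟨z, hz⟩ := ht n
      have h1 : (t n : ℝ) ∈ Ioo (x z) (y z) := hz (left_mem_Icc.2 (htm n.le_succ))
      have h2 : (t (n + 1) : ℝ) ∈ Ioo (x z) (y z) := hz (right_mem_Icc.2 (htm n.le_succ))
      have hz0 := hx0 z z.2
      have hzL := hyL z z.2
      have hat : a ≤ t n := (t n).2.1
      have hmin : (t n : ℝ) < min y' (y z) := lt_min hy' h1.2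
      obtain ⟨s, hs1, hs2⟩ := exists_between hmin
      rw [lt_min_iff] at hs2
      refine ⟨K ∪ J z, hK.union (hJ z z.2).isCompact,
        hKc.union (hJ z z.2).cyclicallyConnected (p := γ (t n)) (q := γ s)
          (h.ne ⟨by linarith, by linarith⟩ ⟨by linarith, by linarith⟩ hs1.ne)
          (hγK ⟨t n, ⟨by linarith, by linarith⟩, rfl⟩)
          (hγJ z z.2 ⟨t n, ⟨h1.1.le, h1.2.le⟩, rfl⟩)
          (hγK ⟨s, ⟨by linarith, by linarith⟩, rfl⟩)
          (hγJ z z.2 ⟨s, ⟨by linarith [h1.1], by linarith⟩, rfl⟩),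
        union_subset hKW (hJW z z.2), x', y z, hx', hx'a, h2.2, hzL, ?_⟩
      rintro _ ⟨r, hr, rfl⟩
      rcases le_total r (t n) with hrt | hrt
      · exact Or.inl (hγK ⟨r, ⟨hr.1, by linarith⟩, rfl⟩)
      · exact Or.inr (hγJ z z.2 ⟨r, ⟨by linarith [h1.1], hr.2⟩, rfl⟩)
  obtain ⟨K, hK, hKc, hKW, x', y', -, hx'a, hy', -, hγK⟩ := key m
  rw [hm m le_rfl] at hy'
  exact ⟨K, hK, hKc, hKW, (image_mono (Icc_subset_Icc hx'a.le hy'.le)).trans hγK⟩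

/-- An initial segment of an approach is covered by small cyclicly connected sets. -/
theorem IsApproach.exists_cyclic [CompactSpace X] [LocallyPathConnectedSpace X]
    (h : IsApproach T γ L) (hT : CyclicallyConnected T) {r c₀ : ℝ} (hr : 0 < r) (hc₀ : 0 < c₀) :
    ∃ c, 0 < c ∧ c ≤ c₀ ∧ c ≤ L ∧ ∀ a, 0 < a → a ≤ c → ∃ K, IsCompact K ∧ CyclicallyConnected K ∧
      K ⊆ ball (γ 0) r \ {γ 0} ∧ γ '' Icc a c ⊆ K := by
  obtain ⟨δ, hδ, hδball⟩ := nhds_basis_closedBall.mem_iff.1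
    (h.continuous.continuousAt.preimage_mem_nhds (ball_mem_nhds (γ 0) hr))
  have hδL : 0 < min δ L := lt_min hδ h.pos
  have hγW : γ '' Icc 0 (min δ L) ⊆ ball (γ 0) r := by
    rintro _ ⟨t, ht, rfl⟩
    refine hδball ?_
    rw [mem_closedBall, Real.dist_eq, sub_zero, abs_of_nonneg ht.1]
    exact ht.2.trans (min_le_left _ _)
  have hev := h.eventually_joinedIn hT isOpen_ball hδL (min_le_right _ _) hγW
  obtain ⟨ε, hε, hεsub⟩ := mem_nhdsGT_iff_exists_Ioo_subset.1 hev
  have hε0 : (0 : ℝ) < ε := hε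
  have hpos : 0 < min (min ε (min δ L)) c₀ := lt_min (lt_min hε0 hδL) hc₀
  have hle₁ : min (min ε (min δ L)) c₀ ≤ ε := (min_le_left _ _).trans (min_le_left _ _)
  have hle₂ : min (min ε (min δ L)) c₀ ≤ min δ L := (min_le_left _ _).trans (min_le_right _ _)
  have hle₃ := min_le_right (min ε (min δ L)) c₀
  have hle₄ := min_le_right δ L
  refine ⟨min (min ε (min δ L)) c₀ / 2, by linarith, by linarith, by linarith, fun a ha hac => ?_⟩
  refine h.exists_cyclic_of_bridges hac fun z hz => ?_
  have hz0 : 0 < z := ha.trans_le hz.1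
  obtain ⟨J, x, y, hJ, hJW, hx, hxz, hzy, hy, hγJ⟩ := h.exists_bridge hz0
    (by linarith [hz.2]) hle₄ hγW (hεsub ⟨hz0, by linarith [hz.2]⟩)
  exact ⟨J, x, y, hJ, hJW, hx, hxz, hzy, hy.trans hle₄, hγJ⟩

/-- A sequence of compact cyclicly connected sets tending to a point, each of which meets only
its neighbours, and these in at least two points. -/
structure IsCyclicChain (K : ℕ → Set X) (p : X) : Prop where
  isCompact : ∀ n, IsCompact (K n)
  cyclic : ∀ n, CyclicallyConnected (K n)
  overlap : ∀ n, ∃ d d', d ≠ d' ∧ d ∈ K n ∧ d' ∈ K n ∧ d ∈ K (n + 1) ∧ d' ∈ K (n + 1)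
  disjoint : ∀ n m, n + 2 ≤ m → Disjoint (K n) (K m)
  tendsto : ∀ ε > 0, ∀ᶠ n in atTop, K n ⊆ ball p ε

theorem IsApproach.exists_cyclicChain [CompactSpace X] [LocallyPathConnectedSpace X]
    (h : IsApproach T γ L) (hT : CyclicallyConnected T) :
    ∃ K, IsCyclicChain K (γ 0) ∧ ∃ u v, u ≠ v ∧ u ∈ K 0 ∧ v ∈ K 0 ∧ u ∈ T ∧ v ∈ T := by
  let good : ℝ × ℝ × Set X → Prop := fun s => 0 < s.1 ∧ 0 < s.2.1 ∧ s.2.1 ≤ L ∧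
    IsCompact s.2.2 ∧ CyclicallyConnected s.2.2 ∧ γ 0 ∉ s.2.2 ∧
    γ '' Icc (s.2.1 / 2) s.2.1 ⊆ s.2.2 ∧
    ∀ a, 0 < a → a ≤ s.2.1 → ∃ K, IsCompact K ∧ CyclicallyConnected K ∧
      K ⊆ ball (γ 0) s.1 \ {γ 0} ∧ γ '' Icc a s.2.1 ⊆ K
  have step : ∀ s : {s // good s}, ∃ s' : {s // good s}, s'.1.1 ≤ s.1.1 / 2 ∧
      Disjoint s.1.2.2 (ball (γ 0) s'.1.1) ∧ s'.1.2.2 ⊆ ball (γ 0) s.1.1 ∧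
      γ '' Icc (s.1.2.1 / 2) s.1.2.1 ⊆ s'.1.2.2 := by
    rintro ⟨⟨r, c, K⟩, hr, hc, hcL, hK, hKc, hpK, hγK, hz⟩
    simp only at *
    obtain ⟨ρ, hρ, hρK⟩ := nhds_basis_ball.mem_iff.1 (hK.isClosed.isOpen_compl.mem_nhds hpK)
    have hr' : 0 < min (r / 2) ρ := lt_min (half_pos hr) hρ
    obtain ⟨c', hc', hc'c, hc'L, hz'⟩ := h.exists_cyclic hT hr' (half_pos hc)
    obtain ⟨K', hK', hKc', hKr', hγK'⟩ := hz (c' / 2) (by linarith) (by linarith)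
    refine ⟨⟨⟨min (r / 2) ρ, c', K'⟩, hr', hc', hc'L, hK', hKc', fun hp => (hKr' hp).2 rfl,
      (image_mono (Icc_subset_Icc le_rfl (by linarith))).trans hγK', hz'⟩, min_le_left _ _, ?_,
      hKr'.trans sdiff_subset, (image_mono (Icc_subset_Icc (by linarith) le_rfl)).trans hγK'⟩
    refine (Set.disjoint_left.2 fun x hx hx' => ?_)
    exact hρK (ball_subset_ball (min_le_right _ _) hx') hx
  obtain ⟨c, hc, -, hcL, hz⟩ := h.exists_cyclic hT one_pos one_pos
  obtain ⟨K, hK, hKc, hKr, hγK⟩ := hz (c / 2) (by linarith) (by linarith)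
  choose f hf using step
  let s : ℕ → {s // good s} := fun n =>
    Nat.rec ⟨⟨1, c, K⟩, one_pos, hc, hcL, hK, hKc, fun hp => (hKr hp).2 rfl, hγK, hz⟩
      (fun _ s => f s) n
  have hs : ∀ n, s (n + 1) = f (s n) := fun n => rfl
  have hanti : Antitone fun n => (s n).1.1 := antitone_nat_of_succ_le fun n => by
    have := (hf (s n)).1
    rw [← hs] at this
    linarith [(s n).2.1]
  have hbound : ∀ n, (s n).1.1 ≤ (1 / 2 : ℝ) ^ n := by
    intro n
    induction n with
    | zero => simp [s]
    | succ n ih =>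
      have := (hf (s n)).1
      rw [← hs] at this
      rw [pow_succ]
      linarith
  refine ⟨fun n => (s n).1.2.2, ⟨fun n => (s n).2.2.2.2.1, fun n => (s n).2.2.2.2.2.1,
    fun n => ?_, fun n m hnm => ?_, fun ε hε => ?_⟩, ?_⟩
  · have h0 := (s n).2.2.1
    have hL := (s n).2.2.2.1
    have hsub := (hf (s n)).2.2.2
    rw [← hs] at hsub
    have hsub' := (s n).2.2.2.2.2.2.2.1
    have m1 : (s n).1.2.1 / 2 ∈ Icc ((s n).1.2.1 / 2) (s n).1.2.1 := ⟨le_rfl, by linarith⟩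
    have m2 : (s n).1.2.1 ∈ Icc ((s n).1.2.1 / 2) (s n).1.2.1 := ⟨by linarith, le_rfl⟩
    exact ⟨γ ((s n).1.2.1 / 2), γ (s n).1.2.1,
      h.ne ⟨by linarith, by linarith⟩ ⟨by linarith, hL⟩ (by linarith),
      hsub' ⟨_, m1, rfl⟩, hsub' ⟨_, m2, rfl⟩, hsub ⟨_, m1, rfl⟩, hsub ⟨_, m2, rfl⟩⟩
  · obtain ⟨k, rfl⟩ := Nat.exists_eq_add_of_le hnm
    have hd := (hf (s n)).2.1
    rw [← hs] at hd
    have hsub := (hf (s (n + 1 + k))).2.2.1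
    rw [← hs] at hsub
    have he : n + 2 + k = n + 1 + k + 1 := by ring
    simp only [he]
    exact hd.mono_right (hsub.trans (ball_subset_ball (hanti (Nat.le_add_right (n + 1) k))))
  · obtain ⟨N, hN⟩ := exists_pow_lt_of_lt_one hε (show (1 / 2 : ℝ) < 1 by norm_num)
    filter_upwards [eventually_ge_atTop (N + 1)] with n hn
    obtain ⟨k, rfl⟩ := Nat.exists_eq_add_of_le hn
    have hsub := (hf (s (N + k))).2.2.1
    rw [← hs] at hsub
    have he : N + 1 + k = N + k + 1 := by ring
    rw [he]
    refine hsub.trans (ball_subset_ball ?_)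
    exact (hanti (Nat.le_add_right N k)).trans ((hbound N).trans hN.le)
  · exact ⟨γ (c / 2), γ c, h.ne ⟨by linarith, by linarith⟩ ⟨by linarith, hcL⟩ (by linarith),
      hγK ⟨_, ⟨le_rfl, by linarith⟩, rfl⟩, hγK ⟨_, ⟨by linarith, le_rfl⟩, rfl⟩,
      h.mem _ ⟨by linarith, by linarith⟩, h.mem _ ⟨hc, hcL⟩⟩

end Bridges

section Closed

variable {X : Type} [MetricSpace X]

theorem locallyFinite_Icc_nat : LocallyFinite fun n : ℕ => Icc (n : ℝ) (n + 1) := by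
  intro x
  refine ⟨Iio (x + 1), Iio_mem_nhds (by linarith), (finite_lt_nat (⌈x + 1⌉₊)).subset ?_⟩
  rintro n ⟨y, hy, hyx⟩
  have hyx' : y < x + 1 := hyx
  have : (n : ℝ) < ⌈x + 1⌉₊ := (hy.1.trans_lt hyx').trans_le (Nat.le_ceil _)
  exact_mod_cast this

/-- Concatenation of a sequence of paths tending to a point. -/
theorem joinedIn_of_tendsto {P : ℕ → Set X} {u : ℕ → X} {p : X}
    (hP : ∀ n, JoinedIn (P n) (u n) (u (n + 1))) (hlim : ∀ ε > 0, ∀ᶠ n in atTop, P n ⊆ ball p ε) :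
    JoinedIn ((⋃ n, P n) ∪ {p}) (u 0) p := by
  choose σ hσ using hP
  have hσ' : ∀ n t, (σ n).extend t ∈ P n := fun n t => by
    obtain ⟨s, hs⟩ : (σ n).extend t ∈ range (σ n) := by
      rw [← Path.extend_range]
      exact mem_range_self t
    rw [← hs]
    exact hσ n s
  let f : ℝ → X := fun t => (σ ⌊t⌋₊).extend (t - ⌊t⌋₊)
  have hfloor : ∀ (n : ℕ) (t : ℝ), ⌊t⌋₊ = n → f t = (σ n).extend (t - n) := by
    rintro _ t rfl
    rfl
  have hf : ∀ n : ℕ, ∀ t ∈ Icc (n : ℝ) (n + 1), f t = (σ n).extend (t - n) := by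
    intro n t ht
    rcases ht.2.eq_or_lt with rfl | hlt
    · have : ⌊(n : ℝ) + 1⌋₊ = n + 1 := by exact_mod_cast Nat.floor_natCast (n + 1)
      rw [hfloor _ _ this]
      simp
    · have : ⌊t⌋₊ = n := (Nat.floor_eq_iff (n.cast_nonneg.trans ht.1)).2 ⟨ht.1, hlt⟩
      exact hfloor _ _ this
  have hfc : ContinuousOn f (Ici 0) := by
    have h1 : ContinuousOn f (⋃ n : ℕ, Icc (n : ℝ) (n + 1)) := by
      refine locallyFinite_Icc_nat.continuousOn_iUnion (fun n => isClosed_Icc) fun n => ?_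
      refine ContinuousOn.congr ?_ (hf n)
      exact ((σ n).continuous_extend.comp (continuous_id.sub continuous_const)).continuousOn
    refine h1.mono fun t ht => mem_iUnion.2 ⟨⌊t⌋₊, Nat.floor_le ht, (Nat.lt_floor_add_one t).le⟩
  have hflim : Tendsto f atTop (𝓝 p) := by
    refine Metric.tendsto_nhds.2 fun ε hε => ?_
    filter_upwards [tendsto_nat_floor_atTop.eventually (hlim ε hε)] with t ht
    exact ht (hσ' _ _)
  let g : ℝ → X := fun s => if s = 0 then p else f (s⁻¹ - 1)
  have hg0 : g 0 = p := if_pos rfl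
  have hg1 : g 1 = u 0 := by
    have h1 : g 1 = f 0 := by simp [g]
    rw [h1, hf 0 0 (by simp)]
    simp
  refine (JoinedIn.ofLine (f := g) ?_ hg0 hg1 ?_).symm
  · intro s hs
    rcases hs.1.eq_or_lt with rfl | hs0
    · have hlim0 : Tendsto (fun s : ℝ => f (s⁻¹ - 1)) (𝓝[>] 0) (𝓝 p) :=
        hflim.comp (tendsto_atTop_add_const_right _ (-1) tendsto_inv_nhdsGT_zero)
      have h2 : ContinuousWithinAt g (Ioi 0) 0 := by
        rw [ContinuousWithinAt, hg0]
        refine hlim0.congr' ?_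
        filter_upwards [self_mem_nhdsWithin] with s hs
        exact (if_neg (ne_of_gt hs)).symm
      have h3 : ContinuousWithinAt g (insert 0 (Ioi 0)) 0 := continuousWithinAt_insert_self.2 h2
      refine h3.mono fun s hs => ?_
      rcases hs.1.eq_or_lt with h | h
      · exact Or.inl h.symm
      · exact Or.inr h
    · have h1 : ContinuousOn (fun s : ℝ => f (s⁻¹ - 1)) (Ioc 0 1) := by
        refine hfc.comp ((continuousOn_inv₀.mono fun s hs => hs.1.ne').sub continuousOn_const) ?_
        intro s hs
        exact sub_nonneg.2 ((one_le_inv₀ hs.1).2 hs.2)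
      have h2 : ContinuousOn g (Ioc 0 1) := h1.congr fun s hs => if_neg hs.1.ne'
      refine (h2 s ⟨hs0, hs.2⟩).mono_of_mem_nhdsWithin ?_
      filter_upwards [self_mem_nhdsWithin, nhdsWithin_le_nhds (Ioi_mem_nhds hs0)] with t ht ht0
      exact ⟨ht0, ht.2⟩
  · rintro _ ⟨s, hs, rfl⟩
    by_cases h0 : s = 0
    · exact Or.inr (if_pos h0)
    · refine Or.inl (mem_iUnion.2 ⟨⌊s⁻¹ - 1⌋₊, ?_⟩)
      simp only [g, if_neg h0]
      exact hσ' _ _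

/-- Two disjoint strands running through a chain to its limit. -/
theorem IsCyclicChain.exists_strands {K : ℕ → Set X} {p : X} (hK : IsCyclicChain K p) {u v : X}
    (huv : u ≠ v) (hu : u ∈ K 0) (hv : v ∈ K 0) :
    ∃ A B, IsArc A u p ∧ IsArc B v p ∧ A ∩ B ⊆ {p} := by
  have step : ∀ n (s : {s : X × X // s.1 ∈ K n ∧ s.2 ∈ K n ∧ s.1 ≠ s.2}),
      ∃ s' : {s : X × X // s.1 ∈ K (n + 1) ∧ s.2 ∈ K (n + 1) ∧ s.1 ≠ s.2}, ∃ P Q,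
        P ⊆ K n ∧ Q ⊆ K n ∧ IsArc P s.1.1 s'.1.1 ∧ IsArc Q s.1.2 s'.1.2 ∧ Disjoint P Q ∧
        P ∩ K (n + 1) = {s'.1.1} ∧ Q ∩ K (n + 1) = {s'.1.2} := by
    rintro n ⟨⟨u, v⟩, hu, hv, huv⟩
    obtain ⟨d, d', hdd', hd, hd', hdK, hdK'⟩ := hK.overlap n
    obtain ⟨P, Q, a, b, hP, hQ, hPa, hQb, hPQ, hPK, hQK⟩ := (hK.cyclic n).exists_linkage_closed
      (hK.isCompact (n + 1)).isClosed hu hv huv hd hd' hdd' hdK hdK'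
    have ha : a ∈ P ∩ K (n + 1) := by rw [hPK]; rfl
    have hb : b ∈ Q ∩ K (n + 1) := by rw [hQK]; rfl
    have hab : a ≠ b := fun e => Set.disjoint_left.1 hPQ ha.1 (e ▸ hb.1)
    exact ⟨⟨(a, b), ha.2, hb.2, hab⟩, P, Q, hP, hQ, hPa, hQb, hPQ, hPK, hQK⟩
  choose f P Q hPK hQK hP hQ hPQ hPK' hQK' using step
  let s : ∀ n, {s : X × X // s.1 ∈ K n ∧ s.2 ∈ K n ∧ s.1 ≠ s.2} := fun n =>
    Nat.rec ⟨(u, v), hu, hv, huv⟩ (fun n s => f n s) n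
  have hs : ∀ n, s (n + 1) = f n (s n) := fun n => rfl
  have hconsec : ∀ n, Disjoint (P n (s n)) (Q (n + 1) (s (n + 1))) ∧
      Disjoint (Q n (s n)) (P (n + 1) (s (n + 1))) := by
    intro n
    constructor <;> refine Set.disjoint_left.2 fun x hx hx' => ?_
    · have h1 : x ∈ P n (s n) ∩ K (n + 1) := ⟨hx, hQK _ _ hx'⟩
      rw [hPK', ← hs] at h1
      have h2 := (hP (n + 1) (s (n + 1))).left_mem
      rw [← h1] at h2
      exact Set.disjoint_left.1 (hPQ _ _) h2 hx'
    · have h1 : x ∈ Q n (s n) ∩ K (n + 1) := ⟨hx, hPK _ _ hx'⟩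
      rw [hQK', ← hs] at h1
      have h2 := (hQ (n + 1) (s (n + 1))).left_mem
      rw [← h1] at h2
      exact Set.disjoint_left.1 (hPQ _ _) hx' h2
  have hdisj : ∀ n m, Disjoint (P n (s n)) (Q m (s m)) := by
    intro n m
    rcases lt_trichotomy n m with h | rfl | h
    · rcases Nat.lt_or_ge (n + 1) m with h' | h'
      · exact (hK.disjoint n m h').mono (hPK _ _) (hQK _ _)
      · obtain rfl : m = n + 1 := le_antisymm h' h
        exact (hconsec n).1
    · exact hPQ _ _
    · rcases Nat.lt_or_ge (m + 1) n with h' | h'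
      · exact (hK.disjoint m n h').symm.mono (hPK _ _) (hQK _ _)
      · obtain rfl : n = m + 1 := le_antisymm h' h
        exact (hconsec m).2.symm
  have hjP : JoinedIn ((⋃ n, P n (s n)) ∪ {p}) u p :=
    joinedIn_of_tendsto (u := fun n => (s n).1.1) (fun n => (hP n (s n)).joinedIn) fun ε hε =>
      (hK.tendsto ε hε).mono fun n hn => (hPK _ _).trans hn
  have hjQ : JoinedIn ((⋃ n, Q n (s n)) ∪ {p}) v p :=
    joinedIn_of_tendsto (u := fun n => (s n).1.2) (fun n => (hQ n (s n)).joinedIn) fun ε hε =>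
      (hK.tendsto ε hε).mono fun n hn => (hQK _ _).trans hn
  obtain ⟨A, hA, hAarc⟩ := hjP.exists_isArc
  obtain ⟨B, hB, hBarc⟩ := hjQ.exists_isArc
  refine ⟨A, B, hAarc, hBarc, ?_⟩
  rintro x ⟨hxA, hxB⟩
  rcases hA hxA with h1 | h1
  · rcases hB hxB with h2 | h2
    · obtain ⟨n, hn⟩ := mem_iUnion.1 h1
      obtain ⟨m, hm⟩ := mem_iUnion.1 h2
      exact absurd hm (Set.disjoint_left.1 (hdisj n m) hn)
    · exact h2
  · exact h1

/-- Maximal cyclic sets are closed. -/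
theorem MaximalCyclic.isClosed [CompactSpace X] [LocallyPathConnectedSpace X] {T : Set X}
    (hT : MaximalCyclic T) : IsClosed T := by
  refine isClosed_of_closure_subset fun p hp => ?_
  by_contra hpT
  obtain ⟨γ, L, h, rfl⟩ := hT.exists_isApproach hp hpT
  obtain ⟨K, hK, u, v, huv, hu, hv, huT, hvT⟩ := h.exists_cyclicChain hT.2.1
  obtain ⟨A, B, hA, hB, hAB⟩ := hK.exists_strands huv hu hv
  exact hpT (hT.arc_subset (hA.trans hB.symm hAB) huT hvT (Or.inl hA.right_mem))

end Closed

section Retraction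

variable {X : Type} [MetricSpace X] [LocallyPathConnectedSpace X] {T : Set X}

theorem mem_pathComponentIn_of_mem_closure {U : Set X} (hU : IsOpen U) {y w : X}
    (hw : w ∈ closure (pathComponentIn U y)) (hwU : w ∈ U) : w ∈ pathComponentIn U y := by
  obtain ⟨z, hzw, hzy⟩ := mem_closure_iff.1 hw _ (hU.pathComponentIn w) (mem_pathComponentIn_self hwU)
  exact JoinedIn.trans hzy (JoinedIn.symm hzw)

/-- The closure of a path component of the complement of a maximal cyclic set meets that set in at
most one point. -/
theorem MaximalCyclic.eq_of_mem_closure_pathComponentIn (hT : MaximalCyclic T) {y a b : X}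
    (hy : y ∉ T) (ha : a ∈ closure (pathComponentIn Tᶜ y)) (hb : b ∈ closure (pathComponentIn Tᶜ y))
    (haT : a ∈ T) (hbT : b ∈ T) : a = b := by
  by_contra hab
  obtain ⟨U, V, hU, hV, haU, hbV, hUV⟩ := t2_separation hab
  obtain ⟨N, hN, hNc, hNU⟩ := exists_isPathConnected_nhds (hU.mem_nhds haU)
  obtain ⟨M, hM, hMc, hMV⟩ := exists_isPathConnected_nhds (hV.mem_nhds hbV)
  have hC : IsPathConnected (pathComponentIn Tᶜ y) := isPathConnected_pathComponentIn hy
  have hcon : IsPathConnected (N ∪ pathComponentIn Tᶜ y ∪ M) := by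
    refine (hNc.union hC (mem_closure_iff_nhds.1 ha N hN)).union hMc ?_
    obtain ⟨z, hzM, hzC⟩ := mem_closure_iff_nhds.1 hb M hM
    exact ⟨z, Or.inr hzC, hzM⟩
  obtain ⟨A, hA, hAarc⟩ := (hcon.joinedIn a (Or.inl (Or.inl (mem_of_mem_nhds hN))) b
    (Or.inr (mem_of_mem_nhds hM))).exists_isArc
  have hAT := hT.arc_subset hAarc haT hbT
  have hAUV : A ⊆ U ∪ V := by
    intro z hz
    rcases hA hz with (h | h) | h
    · exact Or.inl (hNU h)
    · exact absurd (hAT hz) (pathComponentIn_subset h)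
    · exact Or.inr (hMV h)
  obtain ⟨z, -, hzU, hzV⟩ := hAarc.isPreconnected U V hU hV hAUV ⟨a, hAarc.left_mem, haU⟩
    ⟨b, hAarc.right_mem, hbV⟩
  exact Set.disjoint_left.1 hUV hzU hzV

/-- In a connected space, a closed maximal cyclic set is a retract. -/
theorem MaximalCyclic.exists_retraction [ConnectedSpace X] (hT : MaximalCyclic T)
    (hTc : IsClosed T) : ∃ r : X → X, Continuous r ∧ (∀ x, r x ∈ T) ∧ ∀ x ∈ T, r x = x := by
  have hex : ∀ y, ∃ z ∈ T, (y ∈ T → z = y) ∧ (y ∉ T → z ∈ closure (pathComponentIn Tᶜ y)) := by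
    intro y
    by_cases hy : y ∈ T
    · exact ⟨y, hy, fun _ => rfl, fun h => absurd hy h⟩
    · obtain ⟨t, ht, -⟩ := Set.not_subsingleton_iff.1 hT.1
      obtain ⟨w, -, hw⟩ := isPreconnected_univ.inter_frontier_nonempty_of_isOpen
        (hTc.isOpen_compl.pathComponentIn y) (mem_univ y) (mem_pathComponentIn_self hy) (mem_univ t)
        (fun h => pathComponentIn_subset h ht)
      refine ⟨w, ?_, fun h => absurd h hy, fun _ => frontier_subset_closure hw⟩
      by_contra hwT
      rw [(hTc.isOpen_compl.pathComponentIn y).frontier_eq] at hw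
      exact hw.2 (mem_pathComponentIn_of_mem_closure hTc.isOpen_compl hw.1 hwT)
  choose r hrT hr hr' using hex
  refine ⟨r, continuous_iff_continuousAt.2 fun x => ?_, hrT, hr⟩
  by_cases hx : x ∈ T
  · rw [ContinuousAt, hr x hx]
    intro U hU
    obtain ⟨N, hN, hNc, hNU⟩ := exists_isPathConnected_nhds hU
    rw [mem_map]
    filter_upwards [hN] with z hz
    by_cases hzT : z ∈ T
    · rw [mem_preimage, hr z hzT]
      exact hNU hz
    have hopen := hTc.isOpen_compl.pathComponentIn z
    obtain ⟨w, hwN, hw⟩ := hNc.isConnected.isPreconnected.inter_frontier_nonempty_of_isOpen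
      hopen hz (mem_pathComponentIn_self hzT) (mem_of_mem_nhds hN)
      (fun h => pathComponentIn_subset h hx)
    rw [hopen.frontier_eq] at hw
    have hwT : w ∈ T := by
      by_contra hwT
      exact hw.2 (mem_pathComponentIn_of_mem_closure hTc.isOpen_compl hw.1 hwT)
    rw [mem_preimage, hT.eq_of_mem_closure_pathComponentIn hzT (hr' z hzT) hw.1 (hrT z) hwT]
    exact hNU hwN
  · refine (continuousAt_const (y := r x)).congr ?_
    filter_upwards [(hTc.isOpen_compl.pathComponentIn x).mem_nhds (mem_pathComponentIn_self hx)]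
      with z hz
    have hzT : z ∉ T := pathComponentIn_subset hz
    have hz' := hr' z hzT
    rw [pathComponentIn_congr hz] at hz'
    exact hT.eq_of_mem_closure_pathComponentIn hx (hr' x hx) hz' (hrT x) (hrT z)

end Retraction

section Null

variable {X : Type} [MetricSpace X] [LocallyPathConnectedSpace X]

/-- Distinct maximal cyclic sets cannot accumulate away from points. -/
theorem exists_maximalCyclic_subset_nhds [CompactSpace X] {F : Set (Set X)} (hF : F.Infinite)
    (hmax : ∀ T ∈ F, MaximalCyclic T) : ∃ x : X, ∀ U ∈ 𝓝 x, ∃ T ∈ F, T ⊆ U := by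
  by_contra! hcon
  choose U hU hUF using hcon
  obtain ⟨δ, hδ, hLeb⟩ := lebesgue_number_lemma_of_metric (isCompact_univ (X := X))
    (fun x => isOpen_interior (s := U x))
    (fun x _ => mem_iUnion.2 ⟨x, mem_interior_iff_mem_nhds.2 (hU x)⟩)
  have hfar : ∀ T ∈ F, ∃ p : X × X, p.1 ∈ T ∧ p.2 ∈ T ∧ δ ≤ dist p.1 p.2 := by
    intro T hT
    obtain ⟨x, hx, -⟩ := Set.not_subsingleton_iff.1 (hmax T hT).1
    obtain ⟨i, hi⟩ := hLeb x (mem_univ x)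
    obtain ⟨y, hy, hyU⟩ := Set.not_subset.1 (hUF i T hT)
    refine ⟨(x, y), hx, hy, ?_⟩
    by_contra! hlt
    exact hyU (interior_subset (hi (by rwa [mem_ball, dist_comm])))
  let T := hF.natEmbedding
  choose p hp₁ hp₂ hpδ using fun n => hfar (T n) (T n).2
  obtain ⟨⟨a, b⟩, φ, hφ, hlim⟩ := CompactSpace.tendsto_subseq p
  have hab : δ ≤ dist a b :=
    ge_of_tendsto' ((continuous_dist.tendsto (a, b)).comp hlim) fun n => hpδ (φ n)
  obtain ⟨N, hN, hNc, hNb⟩ := exists_isPathConnected_nhds (ball_mem_nhds a (ε := δ / 4) (by linarith))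
  obtain ⟨M, hM, hMc, hMb⟩ := exists_isPathConnected_nhds (ball_mem_nhds b (ε := δ / 4) (by linarith))
  obtain ⟨k, hk⟩ := eventually_atTop.1 (hlim.eventually (prod_mem_nhds hN hM))
  have hn : p (φ k) ∈ N ×ˢ M := hk k le_rfl
  have hm : p (φ (k + 1)) ∈ N ×ˢ M := hk (k + 1) k.le_succ
  have hne : (T (φ k) : Set X) ≠ T (φ (k + 1)) := fun e =>
    k.succ_ne_self.symm (hφ.injective (T.injective (Subtype.ext e)))
  have hTn := hmax _ (T (φ k)).2
  have hTm := hmax _ (T (φ (k + 1))).2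
  obtain ⟨B, hB, hBarc⟩ := hTm.2.1.exists_isArc (hp₁ (φ (k + 1))) (hp₂ (φ (k + 1)))
  have hcon : IsPathConnected (N ∪ B ∪ M) :=
    (hNc.union hBarc.isPathConnected ⟨_, hm.1, hBarc.left_mem⟩).union hMc
      ⟨_, Or.inr hBarc.right_mem, hm.2⟩
  obtain ⟨A, hA, hAarc⟩ :=
    (hcon.joinedIn _ (Or.inl (Or.inl hn.1)) _ (Or.inr hn.2)).exists_isArc
  have hAT := hTn.arc_subset hAarc (hp₁ _) (hp₂ _)
  have hna : dist (p (φ k)).1 a < δ / 4 := hNb hn.1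
  have hnb : dist (p (φ k)).2 b < δ / 4 := hMb hn.2
  have hmid : ∀ s, δ / 4 ≤ s → s ≤ 3 * δ / 4 →
      ∃ z, dist z a = s ∧ z ∈ (T (φ k) : Set X) ∧ z ∈ (T (φ (k + 1)) : Set X) := by
    intro s hs hs'
    have htri := dist_triangle_left a b (p (φ k)).2
    obtain ⟨z, hzA, hz⟩ := hAarc.isPreconnected.intermediate_value hAarc.left_mem hAarc.right_mem
      (f := fun z => dist z a) (by fun_prop) (show s ∈ Icc _ _ from ⟨by linarith, by linarith⟩)
    have hz' : dist z a = s := hz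
    refine ⟨z, hz', hAT hzA, ?_⟩
    rcases hA hzA with (h | h) | h
    · have h1 : dist z a < δ / 4 := hNb h
      linarith
    · exact hB h
    · have h1 : dist z b < δ / 4 := hMb h
      have h2 := dist_triangle_left a b z
      linarith
  obtain ⟨z, hz, hzn, hzm⟩ := hmid (δ / 4) le_rfl (by linarith)
  obtain ⟨w, hw, hwn, hwm⟩ := hmid (δ / 2) (by linarith) (by linarith)
  have hzw : z ≠ w := by
    rintro rfl
    linarith
  exact hne ((hTm.subset_of_two_points hTn.2.1 hzw hzn hzm hwn hwm).antisymm
    (hTn.subset_of_two_points hTm.2.1 hzw hzm hzn hwm hwn))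

end Null

section Contractible

theorem ContractibleSpace.of_retract {Y Z : Type*} [TopologicalSpace Y] [TopologicalSpace Z]
    [ContractibleSpace Y] (i : C(Z, Y)) (r : C(Y, Z)) (h : r.comp i = ContinuousMap.id Z) :
    ContractibleSpace Z := by
  rw [contractible_iff_id_nullhomotopic, ← h]
  have := ((id_nullhomotopic Y).comp_right r).comp_left i
  simpa using this

theorem LocallyContractible.locallyPathConnectedSpace {X : Type} [TopologicalSpace X]
    (h : LocallyContractible X) : LocallyPathConnectedSpace X := by
  refine ⟨fun x => hasBasis_self.2 fun U hU => ?_⟩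
  obtain ⟨V, hV, hVU, -, hVc⟩ := h x U hU
  exact ⟨V, hV, isPathConnected_iff_pathConnectedSpace.2 inferInstance, hVU⟩

end Contractible

/-- A Peano space containing infinitely many non-contractible maximal cyclic subsets
is not locally contractible. -/
theorem not_locallyContractible_of_infinitely_many_noncontractible_maximalCyclic
    (X : Type) [MetricSpace X] [CompactSpace X] [ConnectedSpace X] [LocallyConnectedSpace X]
    (h : {T : Set X | MaximalCyclic T ∧ ¬ ContractibleSpace ↥T}.Infinite) :
    ¬ LocallyContractible X := by
  intro hX
  have := hX.locallyPathConnectedSpace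
  obtain ⟨x, hx⟩ := exists_maximalCyclic_subset_nhds h fun T hT => hT.1
  obtain ⟨V, hV, -, -, hVc⟩ := hX x univ univ_mem
  obtain ⟨T, ⟨hT, hTn⟩, hTV⟩ := hx V hV
  obtain ⟨r, hrc, hrT, hr⟩ := hT.exists_retraction hT.isClosed
  exact hTn (ContractibleSpace.of_retract ⟨inclusion hTV, continuous_inclusion hTV⟩
    ⟨fun v => ⟨r v, hrT v⟩, by fun_prop⟩ (ContinuousMap.ext fun t => Subtype.ext (hr t t.2)))
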